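/- arXiv:1511.09410 — 2 statements merged into one kernel-verified Lean document; each statement's English description precedes it below -/
import Mathlib

section
/- Let ν ≥ 0 be an integer. Then there exist C > 0 and x₀ > 0 such that for all x ≥ x₀, |π x^{3/2} S^{√Bessel}(x,x) − 1| ≤ C x^{−1/2}; in particular S^{√Bessel}(x,x) = (x^{−3/2}/π)(1 + O(x^{−1/2})) as x → +∞. -/
open Filter Topology MeasureTheory

/-- Pochhammer symbol `(a)_k = a(a+1)⋯(a+k-1)`. -/
noncomputable def poch (a : ℂ) (k : ℕ) : ℂ := ∏ i ∈ Finset.range k, (a + i)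

/-- Modified Bessel function of the first kind of complex order `t`, real argument `z > 0`,
defined by its series, with `1/Γ = 0` at the poles of `Γ`. -/
noncomputable def besselI (t : ℂ) (z : ℝ) : ℂ :=
  ∑' m : ℕ, (1 / ((m.factorial : ℂ) * Complex.Gamma (t + m + 1))) *
    ((z / 2 : ℝ) : ℂ) ^ (2 * (m : ℂ) + t)

/-- Modified Bessel function of the second kind of complex order `κ` (with `Re κ > -1/2`),
real argument `z > 0`. -/
noncomputable def besselK (κ : ℂ) (z : ℝ) : ℂ :=
  Complex.Gamma (κ + 1 / 2) * ((2 * z : ℝ) : ℂ) ^ κ / (Real.sqrt Real.pi : ℂ) *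
    ∫ t in Set.Ioi (0 : ℝ), (Real.cos t : ℂ) * (((t ^ 2 + z ^ 2 : ℝ) : ℂ)) ^ (-κ - 1 / 2)

/-- Bessel function of the first kind of real order `ρ`, argument `z > 0`. -/
noncomputable def besselJ (ρ : ℝ) (z : ℝ) : ℝ :=
  ∑' m : ℕ, ((-1 : ℝ) ^ m / (m.factorial * Real.Gamma ((m : ℝ) + 1 + ρ))) *
    (z / 2) ^ (2 * (m : ℝ) + ρ)

/-- The function `P_n(x)`. -/
noncomputable def Pfun (ν : ℕ) (μ : ℝ) (n : ℕ) (x : ℝ) : ℂ :=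
  (-1 : ℂ) ^ n * (((ν + n).factorial : ℂ) * (n.factorial : ℂ) / (ν.factorial : ℂ)) *
    (Real.sqrt μ : ℂ)⁻¹ *
    ∑ k ∈ Finset.range (n + 1),
      ((2 * Real.sqrt x / (1 - μ) : ℝ) : ℂ) ^ k *
        (poch (-(n : ℂ)) k / (poch ((ν : ℂ) + 1) k * (k.factorial : ℂ))) *
        besselI (k : ℂ) ((1 - μ) * Real.sqrt x / μ)

/-- The function `Q_n(y)`. -/
noncomputable def Qfun (ν : ℕ) (μ : ℝ) (n : ℕ) (y : ℝ) : ℂ :=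
  (-1 : ℂ) ^ n * (2 / ((n.factorial : ℂ) ^ 2 * (ν.factorial : ℂ))) * (Real.sqrt μ : ℂ)⁻¹ *
    ∑ l ∈ Finset.range (n + 1),
      ((2 * Real.sqrt y / (1 + μ) : ℝ) : ℂ) ^ (l + ν) *
        (poch (-(n : ℂ)) l / (poch ((ν : ℂ) + 1) l * (l.factorial : ℂ))) *
        besselK ((l : ℂ) + ν) ((1 + μ) * Real.sqrt y / μ)

/-- The correlation kernel `K_N(x,y;μ) = ∑_{n=0}^{N-1} P_n(x) Q_n(y)`. -/
noncomputable def Kker (ν N : ℕ) (μ x y : ℝ) : ℂ :=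
  ∑ n ∈ Finset.range N, Pfun ν μ n x * Qfun ν μ n y

/-- The Bessel kernel in square-root variables, for `x ≠ y`. -/
noncomputable def SBessel (ν : ℕ) (x y : ℝ) : ℝ :=
  -(y / x) ^ ((ν : ℝ) / 2) *
    (2 * Real.sqrt x * besselJ ((ν : ℝ) - 1) (2 * Real.sqrt x) * besselJ (ν : ℝ) (2 * Real.sqrt y) -
      2 * Real.sqrt y * besselJ ((ν : ℝ) - 1) (2 * Real.sqrt y) * besselJ (ν : ℝ) (2 * Real.sqrt x)) /
    ((x - y) * Real.sqrt x * Real.sqrt y)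

/-- The polynomial `𝒫(s,t,ν)`. -/
noncomputable def Ppoly (s t : ℂ) (ν : ℕ) : ℂ :=
  (1 / 4) * (t - s) * (t ^ 2 + s ^ 2 + (t + s) * ((ν : ℂ) - 1) - (ν : ℂ))

/-- The interpolating kernel `𝕊(x,y;g)` (residue-series form), for `x ≠ y`. -/
noncomputable def Sker (ν : ℕ) (g x y : ℝ) : ℂ :=
  (4 / (((x ^ 2 - y ^ 2 : ℝ) : ℂ) * (g : ℂ))) *
    ∑' k : ℕ, ∑' l : ℕ,
      ((-1 : ℂ) ^ (k + l) / ((k.factorial : ℂ) * (l.factorial : ℂ))) *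
        ((x : ℂ) ^ k * (y : ℂ) ^ (l + ν) /
          (Complex.Gamma ((k : ℂ) + ν + 1) * Complex.Gamma ((l : ℂ) + ν + 1))) *
        (Ppoly (l : ℂ) (k : ℂ) ν -
          (g : ℂ) * ((l : ℂ) ^ 2 + (k : ℂ) ^ 2 + (ν : ℂ) * l - (l : ℂ) * k)) *
        besselI (k : ℂ) (x / (2 * g)) * besselK ((l : ℂ) + ν) (y / (2 * g))

/-- The diagonal value `𝕊(x,x;g)` of the interpolating kernel. -/
noncomputable def SkerDiag (ν : ℕ) (g x : ℝ) : ℂ :=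
  (1 / ((g : ℂ) ^ 2 * (x : ℂ))) *
    ∑' k : ℕ, ∑' l : ℕ,
      ((-1 : ℂ) ^ (k + l) / ((k.factorial : ℂ) * (l.factorial : ℂ))) *
        ((x : ℂ) ^ (k + l + ν) /
          (Complex.Gamma ((k : ℂ) + ν + 1) * Complex.Gamma ((l : ℂ) + ν + 1))) *
        (Ppoly (l : ℂ) (k : ℂ) ν -
          (g : ℂ) * ((l : ℂ) ^ 2 + (k : ℂ) ^ 2 + (ν : ℂ) * l - (l : ℂ) * k)) *
        besselI ((k : ℂ) - 1) (x / (2 * g)) * besselK ((l : ℂ) + ν) (x / (2 * g))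

/-- The generalized Laguerre polynomial `L_n^{(ν)}(x)`. -/
noncomputable def laguerreL (ν n : ℕ) (x : ℝ) : ℝ :=
  ∑ k ∈ Finset.range (n + 1),
    (-1 : ℝ) ^ k * Real.Gamma ((n : ℝ) + ν + 1) /
      ((n - k).factorial * Real.Gamma ((ν : ℝ) + k + 1) * k.factorial) * x ^ k

/-- The function `A_N(s,t;μ)` from the Christoffel–Darboux analysis. -/
noncomputable def Afun (ν N : ℕ) (s t : ℂ) (μ : ℝ) : ℂ :=
  -(((1 + μ : ℝ) : ℂ) ^ 2 / 4) * (t - (N : ℂ)) * (t - (N : ℂ) + 1)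
  - (((1 + μ : ℝ) : ℂ) ^ 2 / 4) * ((ν : ℂ) + (N : ℂ) + 1) * ((N : ℂ) + 1) *
      (t - (N : ℂ)) / (s - (N : ℂ) - 1)
  - (μ : ℂ) * (3 * (N : ℂ) + (ν : ℂ)) * (t - (N : ℂ))
  - (((1 - μ : ℝ) : ℂ) ^ 2 / 2) * (2 * (N : ℂ) + (ν : ℂ)) * (t - (N : ℂ))
  + (μ : ℂ) * (N : ℂ) * (s - (N : ℂ))
  + (((1 - μ : ℝ) : ℂ) ^ 2 / 2) * (2 * (N : ℂ) + (ν : ℂ)) * (s - (N : ℂ))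
  + (((1 - μ : ℝ) : ℂ) ^ 2 / 4) * (s - (N : ℂ)) * (s - (N : ℂ) + 1)
  + (((1 - μ : ℝ) : ℂ) ^ 2 / 4) * ((N : ℂ) + 1) * ((ν : ℂ) + (N : ℂ) + 1) *
      (s - (N : ℂ)) / (t - (N : ℂ) - 1)

/-- Kummer's confluent hypergeometric function `Φ(a;b;z)`. -/
noncomputable def kummer (a b z : ℂ) : ℂ :=
  ∑' m : ℕ, poch a m / (poch b m * (m.factorial : ℂ)) * z ^ m

/-- Wright's generalized Bessel function `J_{a,b}(x)`. -/
noncomputable def wrightJ (a b x : ℝ) : ℝ :=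
  ∑' j : ℕ, (-x) ^ j / (j.factorial * Real.Gamma (a + b * j))

/-- Borodin's hard edge kernel `K^{(α,θ)}(x,y)`. -/
noncomputable def borodinK (α θ x y : ℝ) : ℝ :=
  θ * x ^ α * ∫ u in (0 : ℝ)..1,
    wrightJ ((α + 1) / θ) (1 / θ) (x * u) * wrightJ (α + 1) θ ((y * u) ^ θ) * u ^ α

namespace BesselAux

/-- Entire function with `J_n(z) = (z/2)^n phi n (z^2/4)`. -/
noncomputable def phi (n : ℕ) (w : ℝ) : ℝ :=
  ∑' m : ℕ, ((-1 : ℝ) ^ m / (m.factorial * (m + n).factorial)) * w ^ m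

lemma phi_norm_le (n m : ℕ) (w R : ℝ) (hw : |w| ≤ R) :
    ‖((-1 : ℝ) ^ m / (m.factorial * (m + n).factorial)) * w ^ m‖ ≤ R ^ m / m.factorial := by
  have hR : 0 ≤ R := (abs_nonneg w).trans hw
  rw [norm_mul, norm_div, norm_pow, norm_neg, norm_one, one_pow, norm_pow, norm_mul,
    Real.norm_natCast, Real.norm_natCast, Real.norm_eq_abs]
  have h1 : (1 : ℝ) ≤ ((m + n).factorial : ℝ) := by exact_mod_cast Nat.one_le_iff_ne_zero.mpr (Nat.factorial_ne_zero _)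
  have h2 : (0 : ℝ) < (m.factorial : ℝ) := by exact_mod_cast Nat.factorial_pos _
  rw [one_div_mul_eq_div]
  apply div_le_div₀ (by positivity) (by gcongr) h2
  nlinarith

lemma phi_summable (n : ℕ) (w : ℝ) :
    Summable (fun m : ℕ => ((-1 : ℝ) ^ m / (m.factorial * (m + n).factorial)) * w ^ m) :=
  Summable.of_norm_bounded (Real.summable_pow_div_factorial |w|)
    (fun m => phi_norm_le n m w |w| le_rfl)

lemma phi_deriv (n : ℕ) (w : ℝ) : HasDerivAt (phi n) (-phi (n + 1) w) w := by
  have key : HasDerivAt (phi n)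
      (∑' m : ℕ, ((-1 : ℝ) ^ m / (m.factorial * (m + n).factorial)) * (m * w ^ (m - 1))) w := by
    set R : ℝ := |w| + 1
    have hu : Summable (fun m : ℕ => (m : ℝ) * R ^ (m - 1) / m.factorial) := by
      rw [← summable_nat_add_iff 1]
      refine (Real.summable_pow_div_factorial R).congr ?_
      intro m
      rw [Nat.factorial_succ]
      have : (0 : ℝ) < (m.factorial : ℝ) := by exact_mod_cast Nat.factorial_pos _
      push_cast
      field_simp

    refine hasDerivAt_tsum_of_isPreconnected hu (t := Metric.ball 0 R) Metric.isOpen_ball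
      (convex_ball _ _).isPreconnected (y₀ := w) (y := w)
      (g := fun m w => ((-1 : ℝ) ^ m / (m.factorial * (m + n).factorial)) * w ^ m)
      (g' := fun m w => ((-1 : ℝ) ^ m / (m.factorial * (m + n).factorial)) * (m * w ^ (m - 1)))
      ?_ ?_ ?_ (phi_summable n w) ?_
    · intro m y _
      exact (hasDerivAt_pow m y).const_mul _
    · intro m y hy
      have hy' : |y| ≤ R := by simpa using (le_of_lt (by simpa using hy : |y| < R))
      have hR : 0 ≤ R := (abs_nonneg y).trans hy'
      rw [norm_mul, norm_div, norm_pow, norm_neg, norm_one, one_pow, norm_mul, norm_mul, norm_pow,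
        Real.norm_natCast, Real.norm_natCast, Real.norm_natCast, Real.norm_eq_abs]
      have h1 : (1 : ℝ) ≤ ((m + n).factorial : ℝ) := by
        exact_mod_cast Nat.one_le_iff_ne_zero.mpr (Nat.factorial_ne_zero _)
      have h2 : (0 : ℝ) < (m.factorial : ℝ) := by exact_mod_cast Nat.factorial_pos _
      rw [one_div_mul_eq_div]
      apply div_le_div₀ (by positivity) (by gcongr) h2
      nlinarith
    · simp [R]
    · simp [R]
  convert key using 1
  rw [Summable.tsum_eq_zero_add]
  · simp only [phi, CharP.cast_eq_zero, zero_mul, mul_zero, zero_add]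
    rw [← tsum_neg]
    congr 1
    ext m
    rw [Nat.factorial_succ, show m + 1 + n = m + (n + 1) by ring]
    have : (0 : ℝ) < (m.factorial : ℝ) := by exact_mod_cast Nat.factorial_pos _
    push_cast
    field_simp
    simp [pow_succ]
    ring
  · rw [← summable_nat_add_iff 1]
    refine (phi_summable (n + 1) w).neg.congr ?_
    intro m
    rw [Nat.factorial_succ, show m + 1 + n = m + (n + 1) by ring]
    have : (0 : ℝ) < (m.factorial : ℝ) := by exact_mod_cast Nat.factorial_pos _
    push_cast
    field_simp
    simp [pow_succ]
    ring

lemma phi_rec (n : ℕ) (w : ℝ) : phi n w = (n + 1) * phi (n + 1) w - w * phi (n + 2) w := by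
  have hs := phi_summable (n + 1) w
  unfold phi
  rw [← tsum_mul_left, ← tsum_mul_left, (phi_summable n w).tsum_eq_zero_add,
    (hs.mul_left _).tsum_eq_zero_add, add_sub_assoc, ← Summable.tsum_sub]
  · congr 1
    · simp [Nat.factorial_succ]
      have : (0 : ℝ) < (n.factorial : ℝ) := by exact_mod_cast Nat.factorial_pos _
      field_simp
    · congr 1
      ext m
      rw [show m + 1 + n = m + n + 1 by ring, show m + 1 + (n + 1) = (m + n + 1) + 1 by ring,
        show m + (n + 2) = (m + n + 1) + 1 by ring, Nat.factorial_succ m,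
        Nat.factorial_succ (m + n + 1)]
      have : (0 : ℝ) < (m.factorial : ℝ) := by exact_mod_cast Nat.factorial_pos _
      have : (0 : ℝ) < ((m + n + 1).factorial : ℝ) := by exact_mod_cast Nat.factorial_pos _
      push_cast
      field_simp
      ring
  · exact (summable_nat_add_iff (f := fun m : ℕ => ((n : ℝ) + 1) * (((-1 : ℝ) ^ m / (m.factorial * (m + (n + 1)).factorial)) * w ^ m)) 1).mpr (hs.mul_left _)
  · exact (phi_summable (n + 2) w).mul_left _

/-- Bessel functions of natural order. -/
noncomputable def Jn (n : ℕ) (z : ℝ) : ℝ := (z / 2) ^ n * phi n (z ^ 2 / 4)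

lemma Jn_rec (n : ℕ) (z : ℝ) (hz : 0 < z) :
    Jn (n + 2) z = 2 * (n + 1) / z * Jn (n + 1) z - Jn n z := by
  unfold Jn
  rw [phi_rec n]
  field_simp
  ring

lemma besselJ_nat (n : ℕ) (z : ℝ) (hz : 0 < z) : besselJ (n : ℝ) z = Jn n z := by
  unfold besselJ Jn phi
  rw [← tsum_mul_left]
  congr 1
  ext m
  have h1 : Real.Gamma ((m : ℝ) + 1 + n) = ((m + n).factorial : ℝ) := by
    rw [← Real.Gamma_nat_eq_factorial]; push_cast; ring_nf
  have h2 : (z / 2) ^ (2 * (m : ℝ) + n) = (z / 2) ^ n * (z ^ 2 / 4) ^ m := by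
    rw [show (2 * (m : ℝ) + n) = ((2 * m + n : ℕ) : ℝ) by push_cast; ring, Real.rpow_natCast,
      pow_add, pow_mul, mul_comm]
    congr 2; ring
  rw [h1, h2]; ring

lemma besselJ_neg_one (z : ℝ) (hz : 0 < z) : besselJ (-1) z = -Jn 1 z := by
  have hterm : ∀ m : ℕ, ((-1 : ℝ) ^ (m + 1) / ((m + 1).factorial * Real.Gamma (((m + 1 : ℕ) : ℝ) + 1 + (-1)))) *
    (z / 2) ^ (2 * ((m + 1 : ℕ) : ℝ) + (-1)) = -((z / 2) ^ 1 * (((-1 : ℝ) ^ m / (m.factorial * (m + 1).factorial)) * (z ^ 2 / 4) ^ m)) := by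
    intro m
    have h1 : Real.Gamma (((m + 1 : ℕ) : ℝ) + 1 + (-1)) = (m.factorial : ℝ) := by
      rw [← Real.Gamma_nat_eq_factorial]; push_cast; ring_nf
    have h2 : (z / 2) ^ (2 * ((m + 1 : ℕ) : ℝ) + (-1)) = (z / 2) ^ 1 * (z ^ 2 / 4) ^ m := by
      rw [show (2 * ((m + 1 : ℕ) : ℝ) + (-1)) = ((2 * m + 1 : ℕ) : ℝ) by push_cast; ring,
        Real.rpow_natCast, pow_add, pow_mul, mul_comm]
      congr 2; ring
    rw [h1, h2]; ring
  unfold besselJ Jn phi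
  rw [Summable.tsum_eq_zero_add]
  · simp only [hterm]
    rw [tsum_neg, tsum_mul_left]
    simp
  · rw [← summable_nat_add_iff 1]
    simp only [hterm]
    exact ((phi_summable 1 _).mul_left _).neg

lemma J0_deriv (z : ℝ) : HasDerivAt (Jn 0) (-Jn 1 z) z := by
  have h := (phi_deriv 0 (z ^ 2 / 4)).comp z ((hasDerivAt_pow 2 z).div_const 4)
  have e : Jn 0 = phi 0 ∘ fun z => z ^ 2 / 4 := by ext; simp [Jn]
  rw [e]
  refine h.congr_deriv ?_
  simp [Jn]; ring

lemma J1_deriv' (z : ℝ) : HasDerivAt (Jn 1) (Jn 0 z - phi 1 (z ^ 2 / 4) / 2) z := by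
  have h := (phi_deriv 1 (z ^ 2 / 4)).comp z ((hasDerivAt_pow 2 z).div_const 4)
  have h2 := ((hasDerivAt_id z).div_const 2).mul h
  have e : Jn 1 = (fun z => id z / 2) * (phi 1 ∘ fun z => z ^ 2 / 4) := by ext; simp [Jn]
  rw [e]
  refine h2.congr_deriv ?_
  have := phi_rec 0 (z ^ 2 / 4)
  simp [Jn, this]; ring

lemma J1_deriv (z : ℝ) (hz : 0 < z) : HasDerivAt (Jn 1) (Jn 0 z - Jn 1 z / z) z := by
  refine (J1_deriv' z).congr_deriv ?_
  simp [Jn]; field_simp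

lemma J0_zero : Jn 0 0 = 1 := by
  simp only [Jn, phi]
  rw [tsum_eq_single 0]
  · simp
  · intro m hm; simp [hm]


lemma J0_even (z : ℝ) : Jn 0 (-z) = Jn 0 z := by simp [Jn]

lemma J1_odd (z : ℝ) : Jn 1 (-z) = -Jn 1 z := by simp [Jn]; ring

lemma J_bd_pos (z : ℝ) (hz : 0 ≤ z) : Jn 0 z ^ 2 + Jn 1 z ^ 2 ≤ 1 := by
  have hd : ∀ z, HasDerivAt (fun z => Jn 0 z ^ 2 + Jn 1 z ^ 2)
      (2 * Jn 0 z * (-Jn 1 z) + 2 * Jn 1 z * (Jn 0 z - phi 1 (z ^ 2 / 4) / 2)) z := by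
    intro z
    refine (((J0_deriv z).pow 2).add ((J1_deriv' z).pow 2)).congr_deriv ?_
    simp
  have hanti : AntitoneOn (fun z => Jn 0 z ^ 2 + Jn 1 z ^ 2) (Set.Ici 0) := by
    apply antitoneOn_of_deriv_nonpos (convex_Ici 0)
    · exact fun z _ => (hd z).continuousAt.continuousWithinAt
    · exact fun z _ => (hd z).differentiableAt.differentiableWithinAt
    · intro z hz
      rw [interior_Ici, Set.mem_Ioi] at hz
      rw [(hd z).deriv]
      have : Jn 1 z = z / 2 * phi 1 (z ^ 2 / 4) := by simp [Jn]
      have h2 : 0 ≤ z * phi 1 (z ^ 2 / 4) ^ 2 := by positivity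
      rw [this]
      nlinarith
  have h := hanti (Set.mem_Ici.mpr le_rfl) (Set.mem_Ici.mpr hz) hz
  have h1 : Jn 1 0 = 0 := by simp [Jn]
  simpa [J0_zero, h1] using h

lemma J_bd (z : ℝ) : Jn 0 z ^ 2 + Jn 1 z ^ 2 ≤ 1 := by
  rcases le_total 0 z with h | h
  · exact J_bd_pos z h
  · have := J_bd_pos (-z) (by linarith)
    rw [J0_even, J1_odd] at this
    linarith [neg_sq (Jn 1 z)]

lemma J0_abs (z : ℝ) : |Jn 0 z| ≤ 1 := by
  rw [← sq_le_one_iff_abs_le_one]; nlinarith [J_bd z, sq_nonneg (Jn 1 z)]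

lemma J1_abs (z : ℝ) : |Jn 1 z| ≤ 1 := by
  rw [← sq_le_one_iff_abs_le_one]; nlinarith [J_bd z, sq_nonneg (Jn 0 z)]

lemma J0_cont : Continuous (Jn 0) :=
  continuous_iff_continuousAt.mpr fun z => (J0_deriv z).continuousAt

lemma J1_cont : Continuous (Jn 1) :=
  continuous_iff_continuousAt.mpr fun z => (J1_deriv' z).continuousAt

open Complex in
/-- The Laplace-type transform. -/
noncomputable def A (N : ℝ) : ℂ := ∫ w in Set.Ioi (0 : ℝ), exp ((-1 + I * N) * w) * Jn 0 (w * N)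

lemma norm_exp_c (N w : ℝ) : ‖Complex.exp ((-1 + Complex.I * N) * w)‖ = Real.exp (-w) := by
  rw [Complex.norm_exp]; simp

lemma int0 : IntegrableOn (fun w : ℝ => Real.exp (-w)) (Set.Ioi 0) := by
  simpa using integrableOn_exp_neg_Ioi 0

lemma int1 : IntegrableOn (fun w : ℝ => 2 * (w * Real.exp (-w))) (Set.Ioi 0) := by
  have := integrableOn_rpow_mul_exp_neg_mul_rpow (p := 1) (s := 1) (b := 1) (by norm_num) one_pos one_pos
  have h2 := this.const_mul 2
  unfold IntegrableOn
  simpa using h2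

lemma intHalf : IntegrableOn (fun w : ℝ => Real.exp (-w) * w ^ (-(1/2) : ℝ)) (Set.Ioi 0) := by
  have := integrableOn_rpow_mul_exp_neg_mul_rpow (p := 1) (s := -(1/2)) (b := 1) (by norm_num) one_pos one_pos
  refine this.congr_fun ?_ measurableSet_Ioi
  intro w _
  simp [mul_comm]

open Complex in
lemma A_int (N : ℝ) : IntegrableOn (fun w : ℝ => exp ((-1 + I * N) * w) * (Jn 0 (w * N) : ℂ)) (Set.Ioi 0) := by
  refine Integrable.mono' int0 ?_ ?_
  · have := J0_cont
    exact Continuous.aestronglyMeasurable (by fun_prop)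
  · refine Eventually.of_forall fun w => ?_
    rw [norm_mul, norm_exp_c, Complex.norm_real, Real.norm_eq_abs]
    exact mul_le_of_le_one_right (Real.exp_pos _).le (J0_abs _)

open Complex in
lemma A_deriv (N : ℝ) :
    IntegrableOn (fun w : ℝ => exp ((-1 + I * N) * w) * (w * (I * Jn 0 (w * N) - Jn 1 (w * N)))) (Set.Ioi 0) ∧
    HasDerivAt A (∫ w in Set.Ioi (0 : ℝ),
      exp ((-1 + I * N) * w) * (w * (I * Jn 0 (w * N) - Jn 1 (w * N)))) N := by
  have h0 := J0_cont
  have h1 := J1_cont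
  refine hasDerivAt_integral_of_dominated_loc_of_deriv_le (μ := volume.restrict (Set.Ioi (0 : ℝ)))
    (F := fun (N : ℝ) (w : ℝ) => exp ((-1 + I * N) * w) * (Jn 0 (w * N) : ℂ))
    (F' := fun (N : ℝ) (w : ℝ) => exp ((-1 + I * N) * w) * (w * (I * Jn 0 (w * N) - Jn 1 (w * N))))
    (bound := fun w : ℝ => 2 * (w * Real.exp (-w))) (s := Set.univ) Filter.univ_mem ?_ (A_int N) ?_ ?_ int1 ?_
  · exact Eventually.of_forall fun x => Continuous.aestronglyMeasurable (by fun_prop)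
  · exact Continuous.aestronglyMeasurable (by fun_prop)
  · refine (ae_restrict_iff' measurableSet_Ioi).mpr (Eventually.of_forall ?_)
    intro w hw x _
    have hw' : (0 : ℝ) < w := hw
    have hn : ‖(I * Jn 0 (w * x) - Jn 1 (w * x) : ℂ)‖ ≤ 2 := by
      refine (norm_sub_le _ _).trans ?_
      rw [norm_mul, norm_I, one_mul, norm_real, norm_real, Real.norm_eq_abs, Real.norm_eq_abs]
      linarith [J0_abs (w * x), J1_abs (w * x)]
    rw [norm_mul, norm_exp_c, norm_mul, norm_real, Real.norm_eq_abs, abs_of_pos hw']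
    have := mul_le_mul_of_nonneg_left hn (mul_pos (Real.exp_pos (-w)) hw').le
    nlinarith
  · refine Eventually.of_forall ?_
    intro w x _
    have e1 : HasDerivAt (fun x : ℝ => exp ((-1 + I * x) * w)) (exp ((-1 + I * x) * w) * (I * w)) x := by
      have : HasDerivAt (fun x : ℝ => (-1 + I * (x : ℂ)) * w) (I * w) x := by
        have := (((hasDerivAt_id x).ofReal_comp.const_mul I).const_add (-1)).mul_const (w : ℂ)
        simpa using this
      exact this.cexp
    have e2 : HasDerivAt (fun x : ℝ => (Jn 0 (w * x) : ℂ)) ((-Jn 1 (w * x) * w : ℝ) : ℂ) x := by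
      have : HasDerivAt (fun x : ℝ => Jn 0 (w * x)) (-Jn 1 (w * x) * w) x :=
        (J0_deriv (w * x)).comp x (by simpa using (hasDerivAt_id x).const_mul w)
      exact this.ofReal_comp
    refine (e1.mul e2).congr_deriv ?_
    push_cast
    ring

open Complex in
lemma A_ode (N : ℝ) : (1 - 2 * I * N) * (∫ w in Set.Ioi (0 : ℝ),
      exp ((-1 + I * N) * w) * (w * (I * Jn 0 (w * N) - Jn 1 (w * N)))) = I * A N := by
  have hi := (A_deriv N).1
  have hA := A_int N
  rw [A, ← integral_const_mul, ← integral_const_mul, ← sub_eq_zero,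
    ← integral_sub (hi.const_mul _) (hA.const_mul _)]
  have hd : ∀ w ∈ Set.Ioi (0 : ℝ), HasDerivAt
      (fun w : ℝ => exp ((-1 + I * N) * w) * (w * (-I * Jn 0 (w * N) + Jn 1 (w * N))))
      ((1 - 2 * I * N) * (exp ((-1 + I * N) * w) * (w * (I * Jn 0 (w * N) - Jn 1 (w * N))))
        - I * (exp ((-1 + I * N) * w) * (Jn 0 (w * N) : ℂ))) w := by
    intro w _
    have e1 : HasDerivAt (fun w : ℝ => exp ((-1 + I * N) * w)) (exp ((-1 + I * N) * w) * (-1 + I * N)) w := by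
      have : HasDerivAt (fun w : ℝ => (-1 + I * (N : ℂ)) * w) (-1 + I * N) w := by
        have := (hasDerivAt_id w).ofReal_comp.const_mul (-1 + I * (N : ℂ))
        simpa using this
      exact this.cexp
    have hN : HasDerivAt (fun w : ℝ => w * N) N w := by simpa using (hasDerivAt_id w).mul_const N
    have e2 : HasDerivAt (fun w : ℝ => (Jn 0 (w * N) : ℂ)) ((-Jn 1 (w * N) * N : ℝ) : ℂ) w := by
      have : HasDerivAt (fun w : ℝ => Jn 0 (w * N)) (-Jn 1 (w * N) * N) w :=
        HasDerivAt.comp (h₂ := Jn 0) w (J0_deriv (w * N)) hN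
      exact this.ofReal_comp
    have e3 : HasDerivAt (fun w : ℝ => (Jn 1 (w * N) : ℂ))
        (((Jn 0 (w * N) - phi 1 ((w * N) ^ 2 / 4) / 2) * N : ℝ) : ℂ) w := by
      have : HasDerivAt (fun w : ℝ => Jn 1 (w * N)) ((Jn 0 (w * N) - phi 1 ((w * N) ^ 2 / 4) / 2) * N) w :=
        HasDerivAt.comp (h₂ := Jn 1) w (J1_deriv' (w * N)) hN
      exact this.ofReal_comp
    have e4 : HasDerivAt (fun w : ℝ => (w : ℂ)) 1 w := by simpa using (hasDerivAt_id w).ofReal_comp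
    refine (e1.mul (e4.mul ((e2.const_mul (-I)).add e3))).congr_deriv ?_
    have hb : (Jn 1 (w * N) : ℂ) = (w * N / 2 : ℂ) * (phi 1 ((w * N) ^ 2 / 4) : ℂ) := by
      simp [Jn]
    simp only [Pi.add_apply, Pi.mul_apply]
    push_cast
    rw [hb]
    ring_nf
    simp only [I_sq]
    ring
  have h0 := J0_cont
  have h1 := J1_cont
  have hc : Continuous (fun w : ℝ => exp ((-1 + I * N) * w) * (w * (-I * Jn 0 (w * N) + Jn 1 (w * N)))) := by
    fun_prop
  have hlim : Tendsto (fun w : ℝ => exp ((-1 + I * N) * w) * (w * (-I * Jn 0 (w * N) + Jn 1 (w * N))))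
      atTop (𝓝 0) := by
    have hz : Tendsto (fun w : ℝ => 2 * (w ^ 1 * Real.exp (-w))) atTop (𝓝 0) := by
      simpa using (Real.tendsto_pow_mul_exp_neg_atTop_nhds_zero 1).const_mul 2
    refine squeeze_zero_norm' ?_ hz
    filter_upwards [eventually_gt_atTop 0] with w hw
    have hn : ‖(-I * Jn 0 (w * N) + Jn 1 (w * N) : ℂ)‖ ≤ 2 := by
      refine (norm_add_le _ _).trans ?_
      rw [norm_mul, norm_neg, norm_I, one_mul, norm_real, norm_real, Real.norm_eq_abs, Real.norm_eq_abs]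
      linarith [J0_abs (w * N), J1_abs (w * N)]
    rw [norm_mul, norm_exp_c, norm_mul, norm_real, Real.norm_eq_abs, abs_of_pos hw]
    have := mul_le_mul_of_nonneg_left hn (mul_pos (Real.exp_pos (-w)) hw).le
    nlinarith
  rw [integral_Ioi_of_hasDerivAt_of_tendsto hc.continuousWithinAt hd
    ((hi.const_mul _).sub (hA.const_mul _)) hlim]
  simp

open Complex in
lemma A_sq (N : ℝ) : A N ^ 2 * (1 - 2 * I * N) = 1 := by
  have hd : ∀ N : ℝ, HasDerivAt (fun N : ℝ => A N ^ 2 * (1 - 2 * I * N)) 0 N := by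
    intro N
    have h1 := (A_deriv N).2
    have h2 : HasDerivAt (fun N : ℝ => (1 - 2 * I * N : ℂ)) (-(2 * I)) N := by
      have := ((hasDerivAt_id N).ofReal_comp.const_mul (2 * I)).const_sub 1
      simpa using this
    refine ((h1.pow 2).mul h2).congr_deriv ?_
    have := A_ode N
    simp only [Pi.pow_apply]
    push_cast
    linear_combination (2 * A N) * this
  have hc := is_const_of_deriv_eq_zero (f := fun N : ℝ => A N ^ 2 * (1 - 2 * I * N))
    (fun N => (hd N).differentiableAt) (fun N => (hd N).deriv) N 0
  have hA0 : A 0 = 1 := by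
    have : A 0 = ∫ w in Set.Ioi (0 : ℝ), ((Real.exp (-w) : ℝ) : ℂ) := by
      unfold A
      congr 1
      ext w
      simp [J0_zero]
    rw [this, integral_complex_ofReal, integral_exp_neg_Ioi_zero]
    simp
  simpa [hA0] using hc

lemma conv_of_deriv {f f' : ℝ → ℂ} {C : ℝ} (hd : ∀ z, 1 ≤ z → HasDerivAt f (f' z) z)
    (hb : ∀ z, 1 ≤ z → ‖f' z‖ ≤ C / z ^ 2) :
    ∃ k : ℂ, ∀ z, 1 ≤ z → ‖f z - k‖ ≤ C / z := by
  have hC : 0 ≤ C := by simpa using (norm_nonneg _).trans (hb 1 le_rfl)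
  have hab : ∀ a b, 1 ≤ a → a ≤ b → ‖f b - f a‖ ≤ C / a - C / b := by
    intro a b ha hab
    have hB : ∀ z, 0 < z → HasDerivAt (fun z => C / a - C / z) (C / z ^ 2) z := by
      intro z hz
      refine (((hasDerivAt_const z C).div (hasDerivAt_id z) hz.ne').const_sub (C / a)).congr_deriv ?_
      simp
      field_simp
    have key := image_norm_le_of_norm_deriv_right_le_deriv_boundary' (a := a) (b := b)
      (f := fun z => f z - f a) (f' := f') (B := fun z => C / a - C / z) (B' := fun z => C / z ^ 2)
      ?_ ?_ ?_ ?_ ?_ ?_ (x := b) ⟨hab, le_rfl⟩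
    · exact key
    · intro z hz
      exact ((hd z (ha.trans hz.1)).continuousAt.sub continuousAt_const).continuousWithinAt
    · intro z hz
      exact ((hd z (ha.trans hz.1)).sub_const _).hasDerivWithinAt
    · simp
    · intro z hz
      exact (hB z (by linarith [hz.1])).continuousAt.continuousWithinAt
    · intro z hz
      exact (hB z (by linarith [hz.1])).hasDerivWithinAt
    · intro z hz
      exact hb z (ha.trans hz.1)
  have hcau : CauchySeq f := by
    rw [Metric.cauchySeq_iff']
    intro ε hε
    refine ⟨max 1 (C / ε + 1), fun n hn => ?_⟩
    set m := max 1 (C / ε + 1)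
    have hm1 : 1 ≤ m := le_max_left _ _
    have hm2 : C / ε + 1 ≤ m := le_max_right _ _
    rw [dist_eq_norm]
    have h1 := hab m n hm1 hn
    have h2 : 0 ≤ C / n := div_nonneg hC (by linarith)
    have h3 : C / m < ε := by
      rw [div_lt_iff₀ (by linarith)]
      have : C / ε < m := by linarith
      rw [div_lt_iff₀ hε] at this
      linarith
    linarith
  obtain ⟨k, hk⟩ := cauchySeq_tendsto_of_complete hcau
  refine ⟨k, fun z hz => ?_⟩
  have ht : Tendsto (fun b => ‖f b - f z‖) atTop (𝓝 ‖k - f z‖) := (hk.sub_const _).norm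
  rw [norm_sub_rev]
  refine le_of_tendsto ht ?_
  filter_upwards [eventually_ge_atTop z] with b hb'
  have h2 : 0 ≤ C / b := div_nonneg hC (by linarith)
  linarith [hab z b hz hb']

noncomputable def u (z : ℝ) : ℝ := √z * Jn 0 z
noncomputable def v (z : ℝ) : ℝ := 1 / (2 * √z) * Jn 0 z - √z * Jn 1 z

lemma u_deriv (z : ℝ) (hz : 0 < z) : HasDerivAt u (v z) z := by
  refine ((Real.hasDerivAt_sqrt hz.ne').mul (J0_deriv z)).congr_deriv ?_
  simp only [v]; ring

lemma v_deriv (z : ℝ) (hz : 0 < z) : HasDerivAt v (-(1 + 1 / (4 * z ^ 2)) * u z) z := by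
  have hs := Real.hasDerivAt_sqrt hz.ne'
  have hp : 0 < √z := Real.sqrt_pos.mpr hz
  have h1 : HasDerivAt (fun z => 1 / (2 * √z)) (-(1 / (4 * z * √z))) z := by
    have := ((hasDerivAt_const z (1 : ℝ)).div (hs.const_mul 2) (by positivity))
    refine this.congr_deriv ?_
    have := Real.sq_sqrt hz.le
    rw [mul_pow, this]
    field_simp
    ring
  refine ((h1.mul (J0_deriv z)).sub (hs.mul (J1_deriv z hz))).congr_deriv ?_
  simp only [u]
  have h2 := Real.sq_sqrt hz.le
  generalize √z = r at *
  subst h2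
  field_simp
  ring

lemma uv_bd : ∃ M > 0, ∀ z, 1 ≤ z → u z ^ 2 + v z ^ 2 ≤ M := by
  have hd : ∀ z, 0 < z → HasDerivAt (fun z => (u z ^ 2 + v z ^ 2) * Real.exp (1 / (4 * z)))
      ((2 * u z * v z + 2 * v z * (-(1 + 1 / (4 * z ^ 2)) * u z)) * Real.exp (1 / (4 * z)) +
        (u z ^ 2 + v z ^ 2) * (Real.exp (1 / (4 * z)) * (-(1 / (4 * z ^ 2))))) z := by
    intro z hz
    have h1 : HasDerivAt (fun z : ℝ => 1 / (4 * z)) (-(1 / (4 * z ^ 2))) z := by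
      have := (hasDerivAt_const z (1 : ℝ)).div ((hasDerivAt_id z).const_mul 4) (by simp [hz.ne'])
      refine this.congr_deriv ?_
      simp
      field_simp
    refine ((((u_deriv z hz).pow 2).add ((v_deriv z hz).pow 2)).mul h1.exp).congr_deriv ?_
    simp
  have hanti : AntitoneOn (fun z => (u z ^ 2 + v z ^ 2) * Real.exp (1 / (4 * z))) (Set.Ici 1) := by
    apply antitoneOn_of_deriv_nonpos (convex_Ici 1)
    · exact fun z hz => (hd z (by linarith [Set.mem_Ici.mp hz])).continuousAt.continuousWithinAt
    · intro z hz
      rw [interior_Ici, Set.mem_Ioi] at hz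
      exact (hd z (by linarith)).differentiableAt.differentiableWithinAt
    · intro z hz
      rw [interior_Ici, Set.mem_Ioi] at hz
      rw [(hd z (by linarith)).deriv]
      have e : (2 * u z * v z + 2 * v z * (-(1 + 1 / (4 * z ^ 2)) * u z)) * Real.exp (1 / (4 * z)) +
        (u z ^ 2 + v z ^ 2) * (Real.exp (1 / (4 * z)) * (-(1 / (4 * z ^ 2)))) =
        -((u z + v z) ^ 2 * Real.exp (1 / (4 * z)) * (1 / (4 * z ^ 2))) := by ring
      rw [e]
      have : 0 ≤ (u z + v z) ^ 2 * Real.exp (1 / (4 * z)) * (1 / (4 * z ^ 2)) := by positivity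
      linarith
  refine ⟨(u 1 ^ 2 + v 1 ^ 2) * Real.exp (1 / (4 * 1)) + 1, by positivity, fun z hz => ?_⟩
  have h := hanti (Set.mem_Ici.mpr le_rfl) (Set.mem_Ici.mpr hz) hz
  have h1 : 1 ≤ Real.exp (1 / (4 * z)) := Real.one_le_exp (by positivity)
  have h2 : 0 ≤ u z ^ 2 + v z ^ 2 := by positivity
  have h3 : u z ^ 2 + v z ^ 2 ≤ (u z ^ 2 + v z ^ 2) * Real.exp (1 / (4 * z)) := le_mul_of_one_le_right h2 h1
  simp only at h
  linarith

open Complex in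
noncomputable def K (z : ℝ) : ℂ := exp (I * z) * (v z - I * u z)

open Complex in
lemma K_norm (z : ℝ) : ‖K z‖ ^ 2 = u z ^ 2 + v z ^ 2 := by
  rw [K, norm_mul, norm_exp]
  rw [show (v z - I * u z : ℂ) = (v z : ℂ) + ((-u z : ℝ) : ℂ) * I by push_cast; ring, mul_pow,
    ← Complex.normSq_eq_norm_sq, Complex.normSq_add_mul_I]
  simp
  ring

open Complex in
lemma K_deriv (z : ℝ) (hz : 0 < z) : HasDerivAt K (-(exp (I * z) * (u z / (4 * z ^ 2) : ℝ))) z := by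
  have e1 : HasDerivAt (fun x : ℝ => exp (I * x)) (exp (I * z) * I) z := by
    have : HasDerivAt (fun x : ℝ => I * (x : ℂ)) I z := by
      simpa using (hasDerivAt_id z).ofReal_comp.const_mul I
    exact this.cexp
  refine (e1.mul ((v_deriv z hz).ofReal_comp.sub ((u_deriv z hz).ofReal_comp.const_mul I))).congr_deriv ?_
  have hz' : (z : ℂ) ≠ 0 := by exact_mod_cast hz.ne'
  simp only [Pi.sub_apply]
  push_cast
  field_simp
  ring_nf
  simp only [I_sq]
  ring

lemma K_lim : ∃ k : ℂ, ∃ C : ℝ, 0 < C ∧ (∀ z, 1 ≤ z → ‖K z‖ ≤ C) ∧ ∀ z, 1 ≤ z → ‖K z - k‖ ≤ C / z := by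
  obtain ⟨M, hM, h⟩ := uv_bd
  have hu : ∀ z, 1 ≤ z → |u z| ≤ M + 1 := fun z hz => by
    have := h z hz
    have h2 := sq_abs (u z)
    nlinarith [sq_nonneg (v z), sq_nonneg (|u z| - 1)]
  obtain ⟨k, hk⟩ := conv_of_deriv (f := K) (C := M + 1) (fun z hz => K_deriv z (by linarith)) (by
    intro z hz
    have hz' : 0 < z := by linarith
    rw [norm_neg, norm_mul, Complex.norm_exp, Complex.norm_real, norm_div, Real.norm_eq_abs, Real.norm_eq_abs]
    simp only [Complex.mul_re, Complex.I_re, zero_mul, Complex.I_im, Complex.ofReal_im, mul_zero, sub_zero,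
      Real.exp_zero, one_mul]
    rw [abs_of_pos (by positivity : 0 < 4 * z ^ 2)]
    apply div_le_div₀ (by positivity) (hu z hz) (by positivity)
    nlinarith)
  refine ⟨k, M + 1, by positivity, fun z hz => ?_, hk⟩
  have h1 := K_norm z
  have h2 := h z hz
  nlinarith [sq_nonneg (‖K z‖ - 1)]

open Complex in
lemma eu_eq (z : ℝ) : exp (I * z) * u z = (exp (2 * I * z) * (starRingEnd ℂ) (K z) - K z) / (2 * I) := by
  have h : exp (2 * I * z) * exp (-(I * z)) = exp (I * z) := by
    rw [← Complex.exp_add]; ring_nf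
  have hc : (starRingEnd ℂ) (K z) = exp (-(I * z)) * (v z + I * u z) := by
    simp [K, ← Complex.exp_conj]
  rw [hc, ← mul_assoc, h, K]
  field_simp
  ring

lemma u_cont : Continuous u := by
  have := J0_cont
  unfold u
  fun_prop

/-- An auxiliary oscillatory integral. -/
noncomputable def hf (N : ℝ) : ℂ :=
  ∫ w in Set.Ioi (0 : ℝ), ((Real.exp (-w) * w ^ (-(1/2) : ℝ) : ℝ) : ℂ) *
    Complex.exp (2 * Complex.I * (w * N : ℝ))

open Complex in
lemma hf_zero : ∫ w in Set.Ioi (0 : ℝ), ((Real.exp (-w) * w ^ (-(1/2) : ℝ) : ℝ) : ℂ) =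
      (√Real.pi : ℝ) := by
  rw [integral_complex_ofReal, ← Real.Gamma_one_half_eq, Real.Gamma_eq_integral (by norm_num)]
  norm_num

open Complex in
lemma half_fourier_lim : Tendsto hf atTop (𝓝 0) := by
  have h := Real.tendsto_integral_exp_smul_cocompact
    ((Set.Ioi (0 : ℝ)).indicator (fun w : ℝ => ((Real.exp (-w) * w ^ (-(1/2) : ℝ) : ℝ) : ℂ)))
  have h1 : Tendsto (fun N : ℝ => -(1 / Real.pi) * N) atTop (cocompact ℝ) := by
    have : Tendsto (fun N : ℝ => -(1 / Real.pi) * N) atTop atBot :=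
      tendsto_id.const_mul_atTop_of_neg (by have := Real.pi_pos; simp; exact this)
    exact this.mono_right atBot_le_cocompact
  refine (h.comp h1).congr ?_
  intro N
  simp only [Function.comp_apply, hf]
  rw [← integral_indicator measurableSet_Ioi]
  congr 1
  ext w
  by_cases hw : w ∈ Set.Ioi (0 : ℝ)
  · rw [Set.indicator_of_mem hw, Set.indicator_of_mem hw, Circle.smul_def, Real.fourierChar_apply,
      smul_eq_mul, mul_comm]
    congr 2
    have : (Real.pi : ℂ) ≠ 0 := by exact_mod_cast Real.pi_pos.ne'
    push_cast
    field_simp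
  · rw [Set.indicator_of_notMem hw, Set.indicator_of_notMem hw, smul_zero]

open Complex in
lemma k_norm (k : ℂ) (C : ℝ) (hC : 0 < C) (hk : ∀ z, 1 ≤ z → ‖K z - k‖ ≤ C / z) :
    ‖k‖ ^ 2 = 2 / Real.pi := by
  set q : ℝ → ℂ := fun z => exp (I * z) * u z - exp (2 * I * z) * ((starRingEnd ℂ) k / (2 * I)) + k / (2 * I)
    with hq
  have hqc : Continuous q := by
    have := u_cont
    fun_prop
  have hq1 : ∀ z, 1 ≤ z → ‖q z‖ ≤ C / z := by
    intro z hz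
    have e : q z = (exp (2 * I * z) * (starRingEnd ℂ) (K z - k) - (K z - k)) / (2 * I) := by
      simp only [hq, eu_eq, map_sub]
      ring
    have hn : ‖exp (2 * I * z)‖ = 1 := by rw [norm_exp]; simp
    rw [e, norm_div, norm_mul, norm_I, mul_one]
    have := norm_sub_le (exp (2 * I * z) * (starRingEnd ℂ) (K z - k)) (K z - k)
    rw [norm_mul, hn, one_mul, RCLike.norm_conj] at this
    have h2 : ‖(2 : ℂ)‖ = 2 := by simp
    rw [h2]
    have := hk z hz
    linarith
  have hq2 : ∀ z, 0 < z → ‖q z‖ ≤ C + 1 + ‖k‖ := by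
    intro z hz
    rcases le_total 1 z with h | h
    · have h1 := hq1 z h
      have h2 : C / z ≤ C := div_le_self hC.le h
      linarith [norm_nonneg k]
    · have hn : ‖exp (2 * I * z)‖ = 1 := by rw [norm_exp]; simp
      have hn' : ‖exp (I * z)‖ = 1 := by rw [norm_exp]; simp
      have h2 : ‖(2 : ℂ)‖ = 2 := by simp
      have hu : ‖(u z : ℂ)‖ ≤ 1 := by
        rw [norm_real, u, norm_mul, Real.norm_eq_abs, Real.norm_eq_abs, abs_of_nonneg (Real.sqrt_nonneg _)]
        have h3 : √z ≤ 1 := by rw [Real.sqrt_le_left (by norm_num)]; simpa using h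
        exact mul_le_one₀ h3 (abs_nonneg _) (J0_abs z)
      have h4 := norm_add_le (exp (I * z) * u z - exp (2 * I * z) * ((starRingEnd ℂ) k / (2 * I))) (k / (2 * I))
      have h5 := norm_sub_le (exp (I * z) * u z) (exp (2 * I * z) * ((starRingEnd ℂ) k / (2 * I)))
      rw [norm_mul, hn', norm_mul, hn, norm_div, norm_mul, norm_I, h2, RCLike.norm_conj] at h5
      rw [norm_div k, norm_mul 2, norm_I, h2] at h4
      have h6 : ‖q z‖ ≤ _ := h4
      linarith
  -- dominated convergence
  have hdct : Tendsto (fun N : ℝ => ∫ w in Set.Ioi (0 : ℝ),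
      ((Real.exp (-w) * w ^ (-(1/2) : ℝ) : ℝ) : ℂ) * q (w * N)) atTop (𝓝 0) := by
    have := tendsto_integral_filter_of_dominated_convergence (μ := volume.restrict (Set.Ioi (0 : ℝ)))
      (l := atTop) (F := fun (N : ℝ) (w : ℝ) => ((Real.exp (-w) * w ^ (-(1/2) : ℝ) : ℝ) : ℂ) * q (w * N))
      (f := fun _ => (0 : ℂ)) (fun w => (Real.exp (-w) * w ^ (-(1/2) : ℝ)) * (C + 1 + ‖k‖)) ?_ ?_
      (intHalf.mul_const _) ?_
    · simpa using this
    · refine Eventually.of_forall fun N => ?_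
      exact (intHalf.ofReal (𝕜 := ℂ)).aestronglyMeasurable.mul (Continuous.aestronglyMeasurable (by fun_prop))
    · filter_upwards [eventually_gt_atTop 0] with N hN
      refine (ae_restrict_iff' measurableSet_Ioi).mpr (Eventually.of_forall ?_)
      intro w hw
      have hw' : (0 : ℝ) < w := hw
      rw [norm_mul, norm_real, Real.norm_eq_abs, abs_of_nonneg (by positivity)]
      exact mul_le_mul_of_nonneg_left (hq2 _ (by positivity)) (by positivity)
    · refine (ae_restrict_iff' measurableSet_Ioi).mpr (Eventually.of_forall ?_)
      intro w hw
      have hw' : (0 : ℝ) < w := hw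
      have hz : Tendsto (fun z : ℝ => C / z) atTop (𝓝 0) := tendsto_const_nhds.div_atTop tendsto_id
      have hq0 : Tendsto q atTop (𝓝 0) := by
        refine squeeze_zero_norm' ?_ hz
        filter_upwards [eventually_ge_atTop 1] with z hz using hq1 z hz
      have := (hq0.comp (tendsto_id.const_mul_atTop hw')).const_mul
        ((Real.exp (-w) * w ^ (-(1/2) : ℝ) : ℝ) : ℂ)
      simpa using this
  have hiI : ∀ N : ℝ, IntegrableOn (fun w : ℝ => ((Real.exp (-w) * w ^ (-(1/2) : ℝ) : ℝ) : ℂ) *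
      exp (2 * I * (w * N : ℝ))) (Set.Ioi 0) := by
    intro N
    refine Integrable.mono' intHalf ?_ ?_
    · exact (intHalf.ofReal (𝕜 := ℂ)).aestronglyMeasurable.mul (Continuous.aestronglyMeasurable (by fun_prop))
    · refine (ae_restrict_iff' measurableSet_Ioi).mpr (Eventually.of_forall ?_)
      intro w hw
      have hw' : (0 : ℝ) < w := hw
      have hn : ‖exp (2 * I * (w * N : ℝ))‖ = 1 := by rw [norm_exp]; simp
      rw [norm_mul, hn, norm_real, Real.norm_eq_abs, abs_of_nonneg (by positivity), mul_one]
  have hiQ : ∀ N : ℝ, 0 < N → IntegrableOn (fun w : ℝ => ((Real.exp (-w) * w ^ (-(1/2) : ℝ) : ℝ) : ℂ) *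
      q (w * N)) (Set.Ioi 0) := by
    intro N hN
    refine Integrable.mono' (intHalf.mul_const (C + 1 + ‖k‖)) ?_ ?_
    · exact (intHalf.ofReal (𝕜 := ℂ)).aestronglyMeasurable.mul (Continuous.aestronglyMeasurable (by fun_prop))
    · refine (ae_restrict_iff' measurableSet_Ioi).mpr (Eventually.of_forall ?_)
      intro w hw
      have hw' : (0 : ℝ) < w := hw
      rw [norm_mul, norm_real, Real.norm_eq_abs, abs_of_nonneg (by positivity)]
      exact mul_le_mul_of_nonneg_left (hq2 _ (by positivity)) (by positivity)
  have hA : ∀ N : ℝ, 0 < N → (√N : ℂ) * A N =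
      (∫ w in Set.Ioi (0 : ℝ), ((Real.exp (-w) * w ^ (-(1/2) : ℝ) : ℝ) : ℂ) * q (w * N)) +
      hf N * ((starRingEnd ℂ) k / (2 * I)) -
      (√Real.pi : ℝ) * (k / (2 * I)) := by
    intro N hN
    have h0 := hf_zero
    have h0' := hiI 0
    simp only [mul_zero, ofReal_zero, Complex.exp_zero, mul_one] at h0'
    rw [← h0, A, hf, ← integral_const_mul, ← integral_mul_const, ← integral_mul_const,
      ← integral_add (hiQ N hN) ((hiI N).mul_const _), ← integral_sub]
    · refine setIntegral_congr_fun measurableSet_Ioi ?_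
      intro w hw
      have hw' : (0 : ℝ) < w := hw
      have e1 : w ^ (-(1/2) : ℝ) * u (w * N) = √N * Jn 0 (w * N) := by
        rw [u, Real.sqrt_mul hw'.le, Real.sqrt_eq_rpow w]
        have : w ^ (-(1/2) : ℝ) * w ^ (1 / 2 : ℝ) = 1 := by
          rw [← Real.rpow_add hw']; norm_num
        linear_combination (√N * Jn 0 (w * N)) * this
      have e2 : exp ((-1 + I * N) * w) = (Real.exp (-w) : ℝ) * exp (I * (w * N : ℝ)) := by
        rw [ofReal_exp, ← Complex.exp_add]; congr 1; push_cast; ring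
      have e1' : ((w ^ (-(1/2) : ℝ) : ℝ) : ℂ) * (u (w * N) : ℂ) = (√N : ℂ) * (Jn 0 (w * N) : ℂ) := by
        rw [← ofReal_mul, e1, ofReal_mul]
      simp only [hq]
      rw [e2, ofReal_mul (Real.exp (-w))]
      linear_combination (-((Real.exp (-w) : ℝ) : ℂ) * exp (I * (w * N : ℝ))) * e1'
    · exact (hiQ N hN).add ((hiI N).mul_const _)
    · exact h0'.mul_const _
  have hlim : Tendsto (fun N : ℝ => (√N : ℂ) * A N) atTop (𝓝 (-((√Real.pi : ℝ) * (k / (2 * I))))) := by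
    have h := (hdct.add (half_fourier_lim.mul_const ((starRingEnd ℂ) k / (2 * I)))).sub_const
      (((√Real.pi : ℝ) : ℂ) * (k / (2 * I)))
    simp only [zero_mul, add_zero, zero_sub] at h
    refine h.congr' ?_
    filter_upwards [eventually_gt_atTop 0] with N hN
    rw [hA N hN]
  have hlim2 : Tendsto (fun N : ℝ => ((√N : ℂ) * A N) ^ 2 * ((1 / N : ℝ) - 2 * I)) atTop
      (𝓝 ((-((√Real.pi : ℝ) * (k / (2 * I)))) ^ 2 * ((0 : ℝ) - 2 * I))) := by
    refine (hlim.pow 2).mul (Tendsto.sub_const ?_ _)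
    refine (continuous_ofReal.tendsto 0).comp (g := ofReal) (f := fun N : ℝ => 1 / N) ?_
    exact tendsto_const_nhds.div_atTop tendsto_id
  have hone : (-(((√Real.pi : ℝ) : ℂ) * (k / (2 * I)))) ^ 2 * (((0 : ℝ) : ℂ) - 2 * I) = 1 := by
    refine tendsto_nhds_unique hlim2 (tendsto_const_nhds.congr' ?_)
    filter_upwards [eventually_gt_atTop 0] with N hN
    have hN' : (N : ℂ) ≠ 0 := by exact_mod_cast hN.ne'
    have h1 := A_sq N
    have h2 : (√N : ℂ) ^ 2 = N := by rw [← ofReal_pow, Real.sq_sqrt hN.le]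
    rw [mul_pow, h2]
    refine h1.symm.trans ?_
    push_cast
    field_simp
  have hn := congrArg norm hone
  have h2 : ‖(2 : ℂ)‖ = 2 := by simp
  rw [norm_mul, norm_pow, norm_neg, norm_mul, norm_div, norm_mul, norm_I, h2, ofReal_zero, zero_sub, norm_neg,
    norm_mul, h2, norm_I, norm_real, Real.norm_eq_abs, abs_of_nonneg (Real.sqrt_nonneg _), mul_pow,
    Real.sq_sqrt Real.pi_pos.le, norm_one] at hn
  have hpi := Real.pi_pos
  field_simp
  nlinarith

lemma base_asymp : ∃ C > 0, ∀ z, 1 ≤ z → |z * (Jn 0 z ^ 2 + Jn 1 z ^ 2) - 2 / Real.pi| ≤ C / z := by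
  obtain ⟨k, C, hC, hKb, hk⟩ := K_lim
  have hkn := k_norm k C hC hk
  obtain ⟨M, hM, hb⟩ := uv_bd
  refine ⟨C * (C + ‖k‖) + 2 * M, by positivity, fun z hz => ?_⟩
  have hz' : 0 < z := by linarith
  have e : z * (Jn 0 z ^ 2 + Jn 1 z ^ 2) = u z ^ 2 + v z ^ 2 - u z * v z / z + u z ^ 2 / (4 * z ^ 2) := by
    simp only [u, v]
    have hp : 0 < √z := Real.sqrt_pos.mpr hz'
    have h2 := Real.sq_sqrt hz'.le
    generalize √z = r at *
    subst h2
    field_simp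
    ring
  have h1 : |‖K z‖ ^ 2 - ‖k‖ ^ 2| ≤ C / z * (C + ‖k‖) := by
    rw [sq_sub_sq, abs_mul, mul_comm]
    have h3 := (abs_norm_sub_norm_le (K z) k).trans (hk z hz)
    have h4 : |‖K z‖ + ‖k‖| ≤ C + ‖k‖ := by
      rw [abs_of_nonneg (by positivity)]
      linarith [hKb z hz]
    exact mul_le_mul h3 h4 (abs_nonneg _) (by positivity)
  rw [K_norm, hkn] at h1
  have hbz := hb z hz
  have h5 : |u z * v z / z| ≤ M / z := by
    rw [abs_div, abs_of_pos hz']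
    apply div_le_div_of_nonneg_right _ hz'.le
    rw [abs_le]
    constructor <;> nlinarith [sq_nonneg (u z + v z), sq_nonneg (u z - v z)]
  have h6 : |u z ^ 2 / (4 * z ^ 2)| ≤ M / z := by
    rw [abs_of_nonneg (by positivity)]
    apply div_le_div₀ hM.le (by nlinarith [sq_nonneg (v z)]) hz'
    nlinarith
  have e2 : (C * (C + ‖k‖) + 2 * M) / z = C / z * (C + ‖k‖) + M / z + M / z := by ring
  rw [e, e2]
  rw [abs_le] at *
  constructor <;> linarith [h1.1, h1.2, h5.1, h5.2, h6.1, h6.2]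

lemma gen_asymp (n : ℕ) : ∃ C > 0, ∀ z, 1 ≤ z →
    |z * (Jn n z ^ 2 + Jn (n + 1) z ^ 2) - 2 / Real.pi| ≤ C / z := by
  induction n with
  | zero => exact base_asymp
  | succ n ih =>
    obtain ⟨C, hC, h⟩ := ih
    have hpi := Real.pi_pos
    set B := C + 2 / Real.pi with hB
    have hBp : 0 < B := by positivity
    refine ⟨C + 4 * (n + 1) ^ 2 * B + 2 * (n + 1) * B, by positivity, fun z hz => ?_⟩
    have hz' : 0 < z := by linarith
    have h0 := h z hz
    have hCz : C / z ≤ C := div_le_self hC.le hz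
    have hbd : z * (Jn n z ^ 2 + Jn (n + 1) z ^ 2) ≤ B := by
      have := (abs_le.mp h0).2
      linarith
    rw [show n + 1 + 1 = n + 2 by ring, Jn_rec n z hz']
    set a := Jn n z
    set b := Jn (n + 1) z
    have e : z * (b ^ 2 + (2 * (n + 1) / z * b - a) ^ 2) - 2 / Real.pi =
        (z * (a ^ 2 + b ^ 2) - 2 / Real.pi) + 4 * (n + 1) ^ 2 * (b ^ 2 / z) -
        2 * (n + 1) * (2 * (z * (a * b)) / z) := by
      field_simp
      ring
    have h1 : |4 * ((n : ℝ) + 1) ^ 2 * (b ^ 2 / z)| ≤ 4 * (n + 1) ^ 2 * (B / z) := by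
      rw [abs_of_nonneg (by positivity)]
      gcongr
      nlinarith [sq_nonneg a, sq_nonneg b]
    have h2 : |2 * ((n : ℝ) + 1) * (2 * (z * (a * b)) / z)| ≤ 2 * (n + 1) * (B / z) := by
      rw [abs_mul, abs_of_nonneg (by positivity : 0 ≤ 2 * ((n : ℝ) + 1)), abs_div, abs_of_pos hz']
      gcongr
      rw [abs_le]
      constructor <;> nlinarith [mul_nonneg hz'.le (sq_nonneg (a + b)), mul_nonneg hz'.le (sq_nonneg (a - b))]
    have e2 : (C + 4 * ((n : ℝ) + 1) ^ 2 * B + 2 * (n + 1) * B) / z =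
      C / z + 4 * (n + 1) ^ 2 * (B / z) + 2 * (n + 1) * (B / z) := by ring
    rw [e, e2]
    rw [abs_le] at *
    constructor <;> linarith [h0.1, h0.2, h1.1, h1.2, h2.1, h2.2]

lemma besselJ_pred (n : ℕ) (z : ℝ) (hz : 0 < z) :
    besselJ ((n : ℝ) - 1) z = 2 * n / z * Jn n z - Jn (n + 1) z := by
  cases n with
  | zero => simpa using besselJ_neg_one z hz
  | succ n =>
    rw [show ((n + 1 : ℕ) : ℝ) - 1 = n by push_cast; ring, besselJ_nat n z hz, Jn_rec n z hz]
    push_cast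
    ring

lemma dens_asymp (n : ℕ) : ∃ C > 0, ∀ z, 1 ≤ z →
    |z * (besselJ n z ^ 2 - besselJ ((n : ℝ) + 1) z * besselJ ((n : ℝ) - 1) z) - 2 / Real.pi| ≤ C / z := by
  obtain ⟨C, hC, h⟩ := gen_asymp n
  have hpi := Real.pi_pos
  set B := C + 2 / Real.pi with hB
  have hBp : 0 < B := by positivity
  refine ⟨C + n * B, by positivity, fun z hz => ?_⟩
  have hz' : 0 < z := by linarith
  have h0 := h z hz
  have hCz : C / z ≤ C := div_le_self hC.le hz
  have hbd : z * (Jn n z ^ 2 + Jn (n + 1) z ^ 2) ≤ B := by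
    have := (abs_le.mp h0).2
    linarith
  have hs : besselJ ((n : ℝ) + 1) z = Jn (n + 1) z := by
    have := besselJ_nat (n + 1) z hz'
    push_cast at this
    exact this
  rw [hs, besselJ_nat n z hz', besselJ_pred n z hz']
  set a := Jn n z
  set b := Jn (n + 1) z
  have e : z * (a ^ 2 - b * (2 * n / z * a - b)) - 2 / Real.pi =
      (z * (a ^ 2 + b ^ 2) - 2 / Real.pi) - n * (2 * (z * (a * b)) / z) := by
    field_simp
    ring
  have h2 : |(n : ℝ) * (2 * (z * (a * b)) / z)| ≤ n * (B / z) := by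
    rw [abs_mul, abs_of_nonneg (by positivity : 0 ≤ (n : ℝ)), abs_div, abs_of_pos hz']
    gcongr
    rw [abs_le]
    constructor <;> nlinarith [mul_nonneg hz'.le (sq_nonneg (a + b)), mul_nonneg hz'.le (sq_nonneg (a - b))]
  have e2 : (C + n * B) / z = C / z + n * (B / z) := by ring
  rw [e, e2]
  rw [abs_le] at *
  constructor <;> linarith [h0.1, h0.2, h2.1, h2.2]

end BesselAux

/-- Large-`x` asymptotics of the Bessel density:
`S^{√Bessel}(x,x) = (x^{-3/2}/π)(1 + O(x^{-1/2}))`. -/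
theorem bessel_density_asymptotics (ν : ℕ) :
    ∃ C > (0 : ℝ), ∃ x₀ > (0 : ℝ), ∀ x : ℝ, x₀ ≤ x →
      |Real.pi * x ^ ((3 : ℝ) / 2) *
          ((1 / x) * (besselJ (ν : ℝ) (2 * Real.sqrt x) ^ 2 -
            besselJ ((ν : ℝ) + 1) (2 * Real.sqrt x) *
              besselJ ((ν : ℝ) - 1) (2 * Real.sqrt x))) - 1| ≤
        C * x ^ (-(1 : ℝ) / 2) := by
  obtain ⟨C, hC, h⟩ := BesselAux.dens_asymp ν
  have hpi := Real.pi_pos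
  refine ⟨Real.pi * C / 4, by positivity, 1, one_pos, fun x hx => ?_⟩
  have hx' : 0 < x := by linarith
  have hs : 1 ≤ √x := Real.one_le_sqrt.mpr hx
  have h0 := h (2 * √x) (by linarith)
  set E := besselJ (ν : ℝ) (2 * √x) ^ 2 -
            besselJ ((ν : ℝ) + 1) (2 * √x) * besselJ ((ν : ℝ) - 1) (2 * √x)
  have e1 : x ^ ((3 : ℝ) / 2) = x * √x := by
    rw [Real.sqrt_eq_rpow, show (3 : ℝ) / 2 = 1 + 1 / 2 by norm_num, Real.rpow_add hx', Real.rpow_one]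
  have e2 : x ^ (-(1 : ℝ) / 2) = 1 / √x := by
    rw [Real.sqrt_eq_rpow, show -(1 : ℝ) / 2 = -(1 / 2) by norm_num, Real.rpow_neg hx'.le, one_div]
    norm_num
  have e3 : Real.pi * x ^ ((3 : ℝ) / 2) * (1 / x * E) - 1 =
      Real.pi / 2 * (2 * √x * E - 2 / Real.pi) := by
    rw [e1]; field_simp
  rw [e3, e2, abs_mul, abs_of_pos (by positivity : 0 < Real.pi / 2)]
  calc Real.pi / 2 * |2 * √x * E - 2 / Real.pi| ≤ Real.pi / 2 * (C / (2 * √x)) := by gcongr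
    _ = Real.pi * C / 4 * (1 / √x) := by field_simp; norm_num
end

section
/- Let α > −1 and θ > 0 be real. Then lim_{x→+∞} x^{1/(1+θ)} K^{(α,θ)}(x,x) = (1/π) θ^{1/(1+θ)} sin(π/(1+θ)); in particular the leading-order asymptotics of the diagonal of Borodin's hard edge kernel is independent of α. -/
open Filter Topology MeasureTheory

lemma exists_prim (f : ℂ → ℂ) (hf : Differentiable ℂ f) (ρ : ℝ) :
    ∃ P : ℂ → ℂ, ∀ z, ‖z‖ < ρ → HasDerivAt P (f z) z := by
  obtain ⟨P, hP⟩ := (hf.differentiableOn (s := Metric.ball (0:ℂ) ρ)).isExactOn_ball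
  exact ⟨P, fun z hz => hP z (by simpa using hz)⟩

lemma line_int (P f : ℂ → ℂ) (hf : Continuous f) (z0 e : ℂ) (A B : ℝ)
    (h : ∀ t ∈ Set.uIcc A B, HasDerivAt P (f (z0 + t * e)) (z0 + t * e)) :
    ∫ t in A..B, f (z0 + t * e) * e = P (z0 + B * e) - P (z0 + A * e) := by
  have := intervalIntegral.integral_eq_sub_of_hasDerivAt (a := A) (b := B)
    (f := fun t : ℝ => P (z0 + t * e)) (f' := fun t : ℝ => f (z0 + t * e) * e) ?_ ?_
  · exact this
  · intro t ht
    have h1 : HasDerivAt (fun t : ℝ => z0 + (t:ℂ) * e) e t := by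
      have := ((Complex.ofRealCLM.hasDerivAt (x := t)).mul_const e).const_add z0
      simpa using this
    exact (h t ht).comp t h1
  · exact Continuous.intervalIntegrable (by fun_prop) _ _

/-- contour functional: `r0 → r0 + iπ → +∞ + iπ`. -/
noncomputable def hank (f : ℂ → ℂ) (r0 : ℝ) : ℂ :=
  (∫ ψ in (0:ℝ)..Real.pi, f (r0 + ψ * Complex.I) * Complex.I) +
    ∫ r in Set.Ioi r0, f (r + Real.pi * Complex.I)

lemma hank_general (f : ℂ → ℂ) (hf : Differentiable ℂ f)
    (hre : ∀ r : ℝ, (f r).im = 0)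
    (ws wm : ℂ) (r0 : ℝ) (rs : ℝ) (hws : ws = rs) :
    (hank f r0).im = ((wm - ws) * (∫ t in (0:ℝ)..1, f (ws + t * (wm - ws)))
      + ((r0 + Real.pi * Complex.I) - wm) *
        (∫ t in (0:ℝ)..1, f (wm + t * ((r0 + Real.pi * Complex.I) - wm)))
      + ∫ r in Set.Ioi r0, f (r + Real.pi * Complex.I)).im := by
  set we : ℂ := r0 + Real.pi * Complex.I with hwe
  obtain ⟨P, hP⟩ := exists_prim f hf (‖ws‖ + ‖wm‖ + ‖we‖ + |r0| + 1)
  have hball : ∀ (p q : ℂ), ‖p‖ < (‖ws‖ + ‖wm‖ + ‖we‖ + |r0| + 1) →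
      ‖q‖ < (‖ws‖ + ‖wm‖ + ‖we‖ + |r0| + 1) →
      ∫ t in (0:ℝ)..1, f (p + t * (q - p)) * (q - p) = P q - P p := by
    intro p q hp hq
    have := line_int P f hf.continuous p (q - p) 0 1 ?_
    · simpa using this
    · intro t ht
      rw [Set.uIcc_of_le zero_le_one] at ht
      apply hP
      have hc := (convex_ball (0:ℂ) (‖ws‖ + ‖wm‖ + ‖we‖ + |r0| + 1))
      have := hc.add_smul_sub_mem (x := p) (y := q) (by simpa using hp) (by simpa using hq) ht
      simpa using this
  have n1 := norm_nonneg ws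
  have n2 := norm_nonneg wm
  have n3 := norm_nonneg we
  have n4 := abs_nonneg r0
  have e1 := hball ws wm (by linarith) (by linarith)
  have e2 := hball wm we (by linarith) (by linarith)
  have hr0 : ‖(r0:ℂ)‖ = |r0| := by simp
  have e3 := hball ws r0 (by linarith) (by linarith)
  have e4 := line_int P f hf.continuous r0 Complex.I 0 Real.pi (by
    intro t ht
    rw [Set.uIcc_of_le Real.pi_pos.le] at ht
    apply hP
    have hc := (convex_ball (0:ℂ) (‖ws‖ + ‖wm‖ + ‖we‖ + |r0| + 1))
    have := hc.add_smul_sub_mem (x := (r0:ℂ)) (y := we) (by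
      simp; linarith) (by simp; linarith)
      (t := t / Real.pi) ⟨div_nonneg ht.1 Real.pi_pos.le, (div_le_one Real.pi_pos).2 ht.2⟩
    have h2 : (r0:ℂ) + (t / Real.pi) • (we - r0) = r0 + t * Complex.I := by
      rw [hwe]
      have : (Real.pi : ℂ) ≠ 0 := by exact_mod_cast Real.pi_pos.ne'
      simp
      field_simp
    rw [h2] at this
    simpa using this)
  have e3' : (∫ t in (0:ℝ)..1, f (ws + t * ((r0:ℂ) - ws)) * (r0 - ws)).im = 0 := by
    have : (fun t : ℝ => f (ws + t * ((r0:ℂ) - ws)) * (r0 - ws)) =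
      fun t : ℝ => (((f ((rs + t * (r0 - rs) : ℝ) : ℂ)).re * (r0 - rs) : ℝ) : ℂ) := by
      ext t
      have h1 : ws + t * ((r0:ℂ) - ws) = ((rs + t * (r0 - rs) : ℝ) : ℂ) := by
        rw [hws]; push_cast; ring
      rw [h1]
      have h2 : f ((rs + t * (r0 - rs) : ℝ) : ℂ) = ((f ((rs + t * (r0 - rs) : ℝ) : ℂ)).re : ℂ) := by
        apply Complex.ext
        · simp
        · rw [hre]; simp
      rw [h2, hws]
      push_cast
      simp
    rw [this, intervalIntegral.integral_ofReal]
    simp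
  rw [intervalIntegral.integral_mul_const] at e1 e2
  unfold hank
  rw [mul_comm (wm - ws), mul_comm (we - wm), e1, e2, e4, ← hwe]
  rw [e3] at e3'
  simp at e3' ⊢
  linarith

lemma hank_indep (f : ℂ → ℂ) (hf : Differentiable ℂ f)
    (hre : ∀ r : ℝ, (f r).im = 0)
    (hIntg : ∀ r0 : ℝ, IntegrableOn (fun r : ℝ => f (r + Real.pi * Complex.I)) (Set.Ioi r0))
    (r0 r1 : ℝ) : (hank f r0).im = (hank f r1).im := by
  obtain ⟨P, hP⟩ := exists_prim f hf (|r0| + |r1| + Real.pi + 1)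
  have hpi := Real.pi_pos
  have n0 := abs_nonneg r0
  have n1 := abs_nonneg r1
  have v : ∀ r : ℝ, |r| ≤ |r0| + |r1| →
      (∫ ψ in (0:ℝ)..Real.pi, f (r + ψ * Complex.I) * Complex.I) = P (r + Real.pi * Complex.I) - P r := by
    intro r hr
    have := line_int P f hf.continuous r Complex.I 0 Real.pi ?_
    · simpa using this
    · intro t ht
      rw [Set.uIcc_of_le hpi.le] at ht
      apply hP
      calc _ ≤ ‖(r:ℂ)‖ + ‖(t:ℂ) * Complex.I‖ := norm_add_le _ _
        _ = |r| + |t| := by simp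
        _ < _ := by rw [abs_of_nonneg ht.1]; linarith [ht.2]
  have hu : ∀ t ∈ Set.uIcc r0 r1, |t| ≤ |r0| + |r1| := by
    intro t ht
    rcases Set.mem_uIcc.1 ht with h | h <;>
    · rw [abs_le]; constructor <;>
      linarith [neg_abs_le r0, neg_abs_le r1, le_abs_self r0, le_abs_self r1]
  have hh := line_int P f hf.continuous (Real.pi * Complex.I) 1 r0 r1 (by
    intro t ht
    apply hP
    calc _ ≤ ‖(Real.pi:ℂ) * Complex.I‖ + ‖(t:ℂ) * 1‖ := norm_add_le _ _
      _ = |Real.pi| + |t| := by simp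
      _ < _ := by rw [abs_of_nonneg hpi.le]; linarith [hu t ht])
  have hr := line_int P f hf.continuous 0 1 r0 r1 (by
    intro t ht
    apply hP
    simp
    linarith [hu t ht])
  have hr' : (∫ t in r0..r1, f (0 + t * 1) * 1).im = 0 := by
    have : (fun t : ℝ => f (0 + t * 1) * 1) = fun t : ℝ => (((f t).re : ℝ) : ℂ) := by
      ext t
      apply Complex.ext
      · simp
      · simp [hre]
    rw [this, intervalIntegral.integral_ofReal]
    simp
  have hs : (∫ r in Set.Ioi r0, f (r + Real.pi * Complex.I)) =
      (∫ r in r0..r1, f (r + Real.pi * Complex.I)) +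
      ∫ r in Set.Ioi r1, f (r + Real.pi * Complex.I) := by
    rw [← intervalIntegral.integral_interval_add_Ioi (hIntg r0) (hIntg r1)]
  unfold hank
  rw [v r0 (by linarith), v r1 (by linarith), hs]
  rw [hr] at hr'
  simp only [mul_one, zero_add] at hh hr'
  simp_rw [add_comm (_ : ℂ) ((Real.pi:ℂ) * Complex.I)]
  rw [hh]
  simp at hr' ⊢
  linarith


noncomputable def EE (z : ℝ) (w : ℂ) : ℂ := Complex.exp (Complex.exp w + (1 - z) * w)

lemma EE_diff (z : ℝ) : Differentiable ℂ (EE z) := by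
  unfold EE; fun_prop

lemma EE_real (z r : ℝ) : EE z r = ((Real.exp (Real.exp r + (1 - z) * r) : ℝ) : ℂ) := by
  unfold EE; push_cast; rfl

lemma EE_norm (z : ℝ) (w : ℂ) :
    ‖EE z w‖ = Real.exp (Real.exp w.re * Real.cos w.im + (1 - z) * w.re) := by
  unfold EE
  rw [Complex.norm_exp]
  congr 1
  simp [Complex.exp_re]

lemma exp_pi_add (r : ℝ) : Complex.exp ((r:ℂ) + Real.pi * Complex.I) = -(Real.exp r : ℂ) := by
  rw [Complex.exp_add, Complex.exp_pi_mul_I]; push_cast; ring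

lemma EE_pi (z r : ℝ) : EE z (r + Real.pi * Complex.I) =
    ((Real.exp (-Real.exp r + (1 - z) * r) : ℝ) : ℂ) * Complex.exp ((1 - z) * Real.pi * Complex.I) := by
  unfold EE
  rw [exp_pi_add]
  push_cast
  rw [← Complex.exp_add]
  congr 1; ring

lemma integrableOn_expexp (R k r0 : ℝ) (hR : 0 < R) :
    IntegrableOn (fun r : ℝ => Real.exp (-(R * Real.exp r) + k * r)) (Set.Ioi r0) := by
  apply integrable_of_isBigO_exp_neg (b := 1) one_pos
  · fun_prop
  · apply Asymptotics.IsBigO.of_bound 1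
    filter_upwards [eventually_ge_atTop (2 * |k + 1| / R), eventually_ge_atTop 0] with r h1 h0
    simp only [Real.norm_eq_abs, Real.abs_exp, one_mul]
    apply Real.exp_le_exp.2
    have h2 := Real.quadratic_le_exp_of_nonneg h0
    rw [div_le_iff₀ hR] at h1
    have h3 := le_abs_self (k+1)
    have h4 : R * (1 + r + r^2/2) ≤ R * Real.exp r := by gcongr
    have h5 : 2 * |k+1| * r ≤ r * R * r := by gcongr
    have h6 : (k+1) * r ≤ |k+1| * r := by gcongr
    nlinarith [mul_nonneg hR.le h0]

lemma EE_int (z r0 : ℝ) :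
    IntegrableOn (fun r : ℝ => EE z (r + Real.pi * Complex.I)) (Set.Ioi r0) := by
  have h := (integrableOn_expexp 1 (1 - z) r0 one_pos)
  simp_rw [EE_pi]
  have h' : Integrable (fun r : ℝ => Real.exp (-Real.exp r + (1 - z) * r))
      (volume.restrict (Set.Ioi r0)) := by simpa [IntegrableOn] using h
  exact (Integrable.ofReal h').mul_const _

lemma hank_rec (z r0 : ℝ) : (hank (EE z) r0).im = z * (hank (EE (z + 1)) r0).im := by
  have hcont : ∀ z, Continuous (EE z) := fun z => (EE_diff z).continuous
  set Q : ℂ → ℂ := fun w => Complex.exp (Complex.exp w - z * w) with hQ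
  have hQd : ∀ w, HasDerivAt Q (EE z w - z * EE (z+1) w) w := by
    intro w
    have h1 : HasDerivAt (fun w => Complex.exp w - z * w) (Complex.exp w - z * 1) w :=
      (Complex.hasDerivAt_exp w).sub ((hasDerivAt_id w).const_mul _)
    have := h1.cexp
    have he : Complex.exp (Complex.exp w - z * w) * (Complex.exp w - z * 1) =
        EE z w - z * EE (z+1) w := by
      unfold EE
      rw [mul_one, mul_sub, ← Complex.exp_add, mul_comm _ (z:ℂ)]
      push_cast
      congr 2 <;> ring_nf
    rw [he] at this
    exact this
  have hv : (∫ ψ in (0:ℝ)..Real.pi, EE z (r0 + ψ * Complex.I) * Complex.I)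
      - z * (∫ ψ in (0:ℝ)..Real.pi, EE (z+1) (r0 + ψ * Complex.I) * Complex.I)
      = Q (r0 + Real.pi * Complex.I) - Q r0 := by
    have := line_int Q (fun w => EE z w - z * EE (z+1) w)
      (by have := hcont z; have := hcont (z+1); fun_prop) r0 Complex.I 0 Real.pi (fun t _ => hQd _)
    rw [← intervalIntegral.integral_const_mul, ← intervalIntegral.integral_sub]
    · simp only [Complex.ofReal_zero, zero_mul, add_zero] at this
      rw [← this]
      congr 1; ext t; ring
    · apply Continuous.intervalIntegrable; have := hcont z; fun_prop
    · apply Continuous.intervalIntegrable; have := hcont (z+1); fun_prop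
  have hh : (∫ r in Set.Ioi r0, EE z (r + Real.pi * Complex.I))
      - z * (∫ r in Set.Ioi r0, EE (z+1) (r + Real.pi * Complex.I)) = 0 - Q (r0 + Real.pi * Complex.I) := by
    rw [← integral_const_mul, ← integral_sub (EE_int _ _) ((EE_int _ _).const_mul _)]
    apply integral_Ioi_of_hasDerivAt_of_tendsto' (f := fun r : ℝ => Q (r + Real.pi * Complex.I))
    · intro r _
      have h1 : HasDerivAt (fun t : ℝ => (t:ℂ) + Real.pi * Complex.I) 1 r := by
        have := (Complex.ofRealCLM.hasDerivAt (x := r)).add_const (Real.pi * Complex.I)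
        simpa using this
      have h3 := (hQd _).comp r h1
      rw [mul_one] at h3
      exact h3
    · exact (EE_int _ _).sub ((EE_int _ _).const_mul _)
    · rw [tendsto_zero_iff_norm_tendsto_zero]
      have : ∀ r : ℝ, ‖Q (r + Real.pi * Complex.I)‖ = Real.exp (-(Real.exp r + z * r)) := by
        intro r
        simp only [hQ]
        rw [Complex.norm_exp, exp_pi_add]
        congr 1
        simp [Complex.exp_ofReal_re]; ring
      simp_rw [this]
      apply Real.tendsto_exp_neg_atTop_nhds_zero.comp
      apply tendsto_atTop_mono' (f₁ := fun r => r)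
      · filter_upwards [eventually_ge_atTop (2 * |z|), eventually_ge_atTop 0] with r h1 h0
        have h2 := Real.quadratic_le_exp_of_nonneg h0
        have h3 := neg_abs_le z
        nlinarith
      · exact tendsto_id
  have hQr : (Q r0).im = 0 := by
    have : Q r0 = ((Real.exp (Real.exp r0 - z * r0) : ℝ) : ℂ) := by simp [hQ]
    rw [this]; exact Complex.ofReal_im _
  have key : hank (EE z) r0 - z * hank (EE (z+1)) r0 = - Q r0 := by
    unfold hank; linear_combination hv + hh
  have := congrArg Complex.im key
  simp [hQr] at this
  linarith

lemma EE_indep (z r0 r1 : ℝ) : (hank (EE z) r0).im = (hank (EE z) r1).im := by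
  apply hank_indep _ (EE_diff z)
  · intro r; rw [EE_real]; exact Complex.ofReal_im _
  · exact EE_int z

lemma hank_one (r0 : ℝ) : (hank (EE 1) r0).im = Real.pi := by
  have hc : ∀ r, (hank (EE 1) r).im =
      (∫ ψ in (0:ℝ)..Real.pi, Complex.exp ((Real.exp r : ℝ) * Complex.exp (ψ * Complex.I)) * Complex.I).im := by
    intro r
    unfold hank
    rw [Complex.add_im]
    have : (∫ r in Set.Ioi r, EE 1 (r + Real.pi * Complex.I)).im = 0 := by
      simp_rw [EE_pi]
      simp only [Complex.ofReal_one, sub_self, zero_mul, Complex.exp_zero, mul_one]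
      rw [integral_complex_ofReal]; simp
    rw [this, add_zero]
    congr 2
    ext ψ
    unfold EE
    rw [Complex.exp_add (r:ℂ)]
    simp
  have hcont : Continuous (fun ε : ℝ => (∫ ψ in (0:ℝ)..Real.pi, Complex.exp (ε * Complex.exp (ψ * Complex.I)) * Complex.I).im) := by
    apply Complex.continuous_im.comp
    apply intervalIntegral.continuous_parametric_intervalIntegral_of_continuous'
    fun_prop
  have ht := (hcont.tendsto 0).comp Real.tendsto_exp_atBot
  have hz : (∫ ψ in (0:ℝ)..Real.pi, Complex.exp ((0:ℝ) * Complex.exp (ψ * Complex.I)) * Complex.I).im = Real.pi := by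
    simp
  rw [hz] at ht
  have h2 : Tendsto (fun r : ℝ => (hank (EE 1) r0).im) atBot (𝓝 Real.pi) := by
    refine ht.congr ?_
    intro r
    simp only [Function.comp]
    rw [← hc r, EE_indep]
  exact tendsto_nhds_unique tendsto_const_nhds h2

lemma expexp_full (s : ℝ) (hs : 0 < s) :
    Integrable (fun r : ℝ => Real.exp (-Real.exp r + s * r)) ∧
    ∫ r : ℝ, Real.exp (-Real.exp r + s * r) = Real.Gamma s := by
  have himg : Real.exp '' Set.univ = Set.Ioi 0 := by simp [Real.range_exp]
  have hfun : ∀ r : ℝ, |Real.exp r| • (Real.exp (-Real.exp r) * Real.exp r ^ (s - 1)) = Real.exp (-Real.exp r + s * r) := by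
    intro r
    rw [abs_of_pos (Real.exp_pos r), ← Real.exp_mul, smul_eq_mul, ← Real.exp_add, ← Real.exp_add]
    congr 1; ring
  have h1 := integrableOn_image_iff_integrableOn_abs_deriv_smul (s := Set.univ) (f := Real.exp) (f' := Real.exp)
    MeasurableSet.univ (fun x _ => (Real.hasDerivAt_exp x).hasDerivWithinAt) Real.exp_injective.injOn
    (fun x => Real.exp (-x) * x ^ (s - 1))
  have h2 := integral_image_eq_integral_abs_deriv_smul (s := Set.univ) (f := Real.exp) (f' := Real.exp)
    MeasurableSet.univ (fun x _ => (Real.hasDerivAt_exp x).hasDerivWithinAt) Real.exp_injective.injOn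
    (fun x => Real.exp (-x) * x ^ (s - 1))
  rw [himg] at h1 h2
  simp_rw [hfun] at h1 h2
  constructor
  · rw [← integrableOn_univ]; exact h1.1 (Real.GammaIntegral_convergent hs)
  · rw [Real.Gamma_eq_integral hs, h2]; simp

lemma hank_lt_one (z r0 : ℝ) (h0 : 0 < z) (h1 : z < 1) :
    (hank (EE z) r0).im = Real.pi / Real.Gamma z := by
  obtain ⟨hi, hv⟩ := expexp_full (1 - z) (by linarith)
  have ht1 : Tendsto (fun r : ℝ => ∫ ψ in (0:ℝ)..Real.pi, EE z (r + ψ * Complex.I) * Complex.I) atBot (𝓝 0) := by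
    have hb : ∀ r : ℝ, ‖∫ ψ in (0:ℝ)..Real.pi, EE z (r + ψ * Complex.I) * Complex.I‖ ≤
        Real.exp (Real.exp r) * Real.exp ((1 - z) * r) * |Real.pi - 0| := by
      intro r
      apply intervalIntegral.norm_integral_le_of_norm_le_const
      intro ψ _
      rw [norm_mul, EE_norm, Complex.norm_I, mul_one, ← Real.exp_add]
      apply Real.exp_le_exp.2
      simp
      nlinarith [Real.cos_le_one ψ, Real.exp_pos r]
    apply squeeze_zero_norm hb
    have e1 : Tendsto (fun r : ℝ => Real.exp (Real.exp r)) atBot (𝓝 1) := by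
      have := (Real.continuous_exp.tendsto 0).comp Real.tendsto_exp_atBot
      rw [Real.exp_zero] at this
      exact this
    have e2 : Tendsto (fun r : ℝ => Real.exp ((1 - z) * r)) atBot (𝓝 0) := by
      apply Real.tendsto_exp_atBot.comp
      exact tendsto_id.const_mul_atBot (by linarith)
    simpa using (e1.mul e2).mul_const (|Real.pi - 0|)
  have hIntg : Integrable (fun r : ℝ => EE z (r + Real.pi * Complex.I)) := by
    simp_rw [EE_pi]
    exact (Integrable.ofReal hi).mul_const _
  have hfull : ∫ r : ℝ, EE z (r + Real.pi * Complex.I) =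
      (Real.Gamma (1 - z) : ℂ) * Complex.exp ((1 - z) * Real.pi * Complex.I) := by
    simp_rw [EE_pi]
    rw [integral_mul_const, integral_complex_ofReal, hv]
  have ht2 : Tendsto (fun r0 : ℝ => ∫ r in Set.Ioi r0, EE z (r + Real.pi * Complex.I)) atBot
      (𝓝 (∫ r : ℝ, EE z (r + Real.pi * Complex.I))) := by
    have hc : AECover volume atBot (fun r0 : ℝ => Set.Ioi r0) := aecover_Ioi tendsto_id
    exact hc.integral_tendsto_of_countably_generated hIntg
  have ht := (Complex.continuous_im.tendsto _).comp (ht1.add ht2)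
  have h2 : Tendsto (fun r : ℝ => (hank (EE z) r0).im) atBot
     (𝓝 (0 + ∫ r : ℝ, EE z (r + Real.pi * Complex.I)).im) := by
    refine ht.congr ?_
    intro r
    rw [EE_indep z r0 r]; rfl
  rw [tendsto_nhds_unique tendsto_const_nhds h2, zero_add, hfull]
  have he : ((1:ℂ) - z) * Real.pi = (((1 - z) * Real.pi : ℝ) : ℂ) := by push_cast; ring
  rw [Complex.im_ofReal_mul, he, Complex.exp_ofReal_mul_I_im]
  have hg := Real.Gamma_mul_Gamma_one_sub z
  have hgp := Real.Gamma_pos_of_pos h0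
  have hs : Real.sin ((1 - z) * Real.pi) = Real.sin (Real.pi * z) := by
    rw [← Real.sin_pi_sub]; congr 1; ring
  have hsp : 0 < Real.sin (Real.pi * z) := by
    apply Real.sin_pos_of_pos_of_lt_pi
    · have := Real.pi_pos; positivity
    · have := Real.pi_pos; nlinarith
  rw [hs, eq_div_iff hgp.ne']
  rw [eq_div_iff hsp.ne'] at hg
  linarith

/-- Hankel's formula. -/
lemma hankel (z r0 : ℝ) (h0 : 0 < z) : (hank (EE z) r0).im = Real.pi / Real.Gamma z := by
  obtain ⟨n, hn⟩ : ∃ n : ℕ, z ≤ n + 1 := by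
    obtain ⟨n, hn⟩ := exists_nat_ge z
    exact ⟨n, by linarith⟩
  induction n generalizing z with
  | zero =>
    rcases lt_or_eq_of_le hn with h | h
    · exact hank_lt_one z r0 h0 (by simpa using h)
    · have : z = 1 := by simpa using h
      subst this
      rw [hank_one]; simp
  | succ n ih =>
    rcases le_or_gt z 1 with h | h
    · rcases lt_or_eq_of_le h with h | h
      · exact hank_lt_one z r0 h0 (by simpa using h)
      · subst h
        rw [hank_one]; simp
    · have hi := ih (z - 1) (by linarith) (by push_cast at hn; linarith)
      have hr := hank_rec (z - 1) r0
      rw [hi, sub_add_cancel] at hr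
      have hg := Real.Gamma_add_one (s := z - 1) (by linarith)
      rw [sub_add_cancel] at hg
      have : 0 < Real.Gamma (z - 1) := Real.Gamma_pos_of_pos (by linarith)
      have hz : z - 1 ≠ 0 := by linarith
      rw [hg]
      field_simp
      field_simp at hr
      linarith


noncomputable def WW (a b x : ℝ) (w : ℂ) : ℂ :=
  Complex.exp (Complex.exp w - x * Complex.exp (-(b * w)) + (1 - a) * w)

lemma WW_eq (a b x : ℝ) (w : ℂ) :
    WW a b x w = EE a w * Complex.exp (-x * Complex.exp (-(b * w))) := by
  unfold WW EE; rw [← Complex.exp_add]; congr 1; ring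

lemma EE_shift (a b : ℝ) (j : ℕ) (w : ℂ) :
    EE (a + b * j) w = EE a w * Complex.exp (-(b * w)) ^ j := by
  unfold EE; rw [← Complex.exp_nat_mul, ← Complex.exp_add]; congr 1; push_cast; ring

lemma sum_int (μ : Measure ℝ) (w : ℝ → ℂ) (hw : Continuous w) (a b x r0 : ℝ) (hb : 0 < b)
    (hr : ∀ᵐ t ∂μ, r0 ≤ (w t).re) (hi : Integrable (fun t => EE a (w t)) μ) :
    HasSum (fun j : ℕ => ((-x) ^ j / j.factorial : ℝ) * ∫ t, EE (a + b * j) (w t) ∂μ)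
      (∫ t, WW a b x (w t) ∂μ) ∧ ∀ j : ℕ, Integrable (fun t => EE (a + b * j) (w t)) μ := by
  have hcont : ∀ z, Continuous (EE z) := fun z => (EE_diff z).continuous
  have hn : ∀ᵐ t ∂μ, ‖Complex.exp (-(b * w t))‖ ≤ Real.exp (-(b * r0)) := by
    filter_upwards [hr] with t ht
    rw [Complex.norm_exp]
    apply Real.exp_le_exp.2
    simp
    gcongr
  have hle : ∀ j : ℕ, ∀ᵐ t ∂μ, ‖EE (a + b * j) (w t)‖ ≤ Real.exp (-(b * r0)) ^ j * ‖EE a (w t)‖ := by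
    intro j
    filter_upwards [hn] with t ht
    rw [EE_shift, norm_mul, norm_pow, mul_comm]
    gcongr
  have hIntg : ∀ j : ℕ, Integrable (fun t => EE (a + b * j) (w t)) μ := by
    intro j
    refine (hi.norm.const_mul (Real.exp (-(b * r0)) ^ j)).mono' ?_ (hle j)
    exact ((hcont _).comp hw).aestronglyMeasurable
  refine ⟨?_, hIntg⟩
  have key := hasSum_integral_of_summable_integral_norm (μ := μ)
    (F := fun (j : ℕ) t => (((-x) ^ j / j.factorial : ℝ) : ℂ) * EE (a + b * j) (w t))
    (fun j => (hIntg j).const_mul _) ?_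
  · simp_rw [integral_const_mul] at key
    suffices hS : ∫ t, WW a b x (w t) ∂μ = ∫ t, ∑' j : ℕ,
        (((-x) ^ j / j.factorial : ℝ) : ℂ) * EE (a + b * j) (w t) ∂μ by
      rw [hS]; exact key
    apply integral_congr_ae
    filter_upwards with t
    rw [WW_eq]
    have h := (NormedSpace.expSeries_div_hasSum_exp (𝔸 := ℂ) (-x * Complex.exp (-(b * w t))))
    rw [← Complex.exp_eq_exp_ℂ] at h
    rw [← (h.mul_left (EE a (w t))).tsum_eq]
    apply tsum_congr
    intro j
    rw [EE_shift]
    push_cast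
    rw [mul_pow]
    ring
  · have hs : Summable (fun j : ℕ => (|x| * Real.exp (-(b * r0))) ^ j / j.factorial * ∫ t, ‖EE a (w t)‖ ∂μ) :=
      (Real.summable_pow_div_factorial _).mul_right _
    refine Summable.of_nonneg_of_le (fun j => integral_nonneg fun t => norm_nonneg _) ?_ hs
    intro j
    rw [← integral_const_mul]
    apply integral_mono_ae
    · exact ((hIntg j).const_mul _).norm
    · exact hi.norm.const_mul _
    · filter_upwards [hle j] with t ht
      rw [norm_mul]
      have : ‖(((-x) ^ j / j.factorial : ℝ) : ℂ)‖ = |x| ^ j / j.factorial := by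
        rw [Complex.norm_real, norm_div, norm_pow]; simp
      rw [this, mul_pow]
      calc _ ≤ |x| ^ j / j.factorial * (Real.exp (-(b * r0)) ^ j * ‖EE a (w t)‖) := by gcongr
        _ = _ := by ring

lemma wright_rep (a b x r0 : ℝ) (ha : 0 < a) (hb : 0 < b) :
    wrightJ a b x = (1 / Real.pi) * (hank (WW a b x) r0).im := by
  have hcont : ∀ z, Continuous (EE z) := fun z => (EE_diff z).continuous
  have h1 := (sum_int (volume.restrict (Set.Ioc 0 Real.pi)) (fun ψ : ℝ => r0 + ψ * Complex.I)
    (by fun_prop) a b x r0 hb (by simp) (by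
      have : IntervalIntegrable (fun ψ : ℝ => EE a (r0 + ψ * Complex.I)) volume 0 Real.pi :=
        Continuous.intervalIntegrable (by have := hcont a; fun_prop) _ _
      exact this.1)).1
  have h2 := (sum_int (volume.restrict (Set.Ioi r0)) (fun r : ℝ => r + Real.pi * Complex.I)
    (by fun_prop) a b x r0 hb (by
      filter_upwards [ae_restrict_mem measurableSet_Ioi] with r hr
      simpa using le_of_lt hr) (EE_int a r0)).1
  have h3 : HasSum (fun j : ℕ => (((-x) ^ j / j.factorial : ℝ) : ℂ) * hank (EE (a + b * j)) r0)
      (hank (WW a b x) r0) := by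
    have := (h1.mul_right Complex.I).add h2
    unfold hank
    simp_rw [intervalIntegral.integral_mul_const, intervalIntegral.integral_of_le Real.pi_pos.le]
    refine this.congr_fun ?_
    intro j
    ring
  have h4 := Complex.hasSum_im h3
  simp_rw [Complex.im_ofReal_mul] at h4
  have h5 := (h4.mul_left (1 / Real.pi)).tsum_eq
  rw [← h5]
  unfold wrightJ
  apply tsum_congr
  intro j
  rw [hankel _ _ (by positivity)]
  have := Real.pi_pos.ne'
  field_simp

lemma Gamma_lower (z : ℝ) (hz : 0 < z) : 1 / 6 ≤ Real.Gamma z := by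
  have mono := Real.Gamma_strictMonoOn_Ici.monotoneOn
  have h2 : Real.Gamma 2 = 1 := Real.Gamma_two
  rcases le_or_gt 2 z with h | h
  · have := mono (by simp : (2:ℝ) ∈ Set.Ici 2) h h
    rw [h2] at this; linarith
  · have h3 := mono (by simp : (2:ℝ) ∈ Set.Ici 2) (by simp; linarith : z + 1 + 1 ∈ Set.Ici 2) (by linarith)
    rw [Real.Gamma_add_one (by linarith), Real.Gamma_add_one (by linarith), h2] at h3
    have hp := Real.Gamma_pos_of_pos hz
    have : (z + 1) * (z * Real.Gamma z) ≤ 6 * Real.Gamma z := by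
      have : (z+1)*z ≤ 6 := by nlinarith
      nlinarith
    linarith

lemma wright_cont (a b : ℝ) (ha : 0 < a) (hb : 0 < b) : Continuous (wrightJ a b) := by
  rw [continuous_iff_continuousAt]
  intro x0
  have : ContinuousOn (wrightJ a b) (Metric.ball 0 (|x0| + 1)) := by
    unfold wrightJ
    apply continuousOn_tsum (u := fun j : ℕ => 6 * ((|x0| + 1) ^ j / j.factorial))
    · intro j; fun_prop
    · exact (Real.summable_pow_div_factorial _).mul_left _
    · intro j x hx
      have hx' : |x| ≤ |x0| + 1 := by simpa using (le_of_lt (by simpa using hx : |x| < |x0| + 1))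
      have hg := Gamma_lower (a + b * j) (by positivity)
      have hg' : 0 < Real.Gamma (a + b * j) := by linarith
      rw [norm_div, norm_pow, norm_neg, norm_mul, Real.norm_eq_abs, Real.norm_natCast,
        Real.norm_of_nonneg hg'.le, div_mul_eq_div_div]
      have h6 : |x| ^ j / j.factorial ≤ (|x0| + 1) ^ j / j.factorial := by gcongr
      rw [div_le_iff₀ hg']
      have h7 : 0 ≤ (|x0| + 1) ^ j / j.factorial := by positivity
      nlinarith
  exact this.continuousAt (Metric.isOpen_ball.mem_nhds (by simp))


lemma laplace (k h : ℝ → ℂ) (hk : Continuous k) (hh : Continuous h) (c κ A B : ℝ)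
    (hκ : 0 < κ) (hA : 0 < A) (hB : 0 < B)
    (hlim : Tendsto (fun τ : ℝ => k τ / τ ^ 2) (𝓝[≠] 0) (𝓝 (-(c / 2)))) (hk0 : k 0 = 0)
    (hbd : ∀ τ ∈ Set.Icc (-A) B, (k τ).re ≤ -κ * τ ^ 2) :
    Tendsto (fun R : ℝ => (Real.sqrt R : ℂ) * ∫ τ in (-A)..B, Complex.exp (R * k τ) * h τ) atTop
      (𝓝 (h 0 * (Real.sqrt (2 * Real.pi / c) : ℝ))) := by
  obtain ⟨H, hH⟩ : ∃ H, ∀ τ ∈ Set.Icc (-A) B, ‖h τ‖ ≤ H :=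
    isCompact_Icc.exists_bound_of_continuousOn hh.continuousOn
  have hH0 : 0 ≤ H := (norm_nonneg _).trans (hH 0 ⟨by linarith, hB.le⟩)
  set F : ℝ → ℝ → ℂ := fun R t => Set.indicator (Set.Ioc (-A * Real.sqrt R) (B * Real.sqrt R))
    (fun t => Complex.exp (R * k (t / Real.sqrt R)) * h (t / Real.sqrt R)) t with hF
  have hgauss : ∫ t : ℝ, Complex.exp (-((c / 2 : ℝ) : ℂ) * t ^ 2) * h 0 =
      h 0 * (Real.sqrt (2 * Real.pi / c) : ℝ) := by
    rw [integral_mul_const]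
    have h1 := integral_gaussian (c / 2)
    have h2 : ∀ t : ℝ, Complex.exp (-((c / 2 : ℝ) : ℂ) * t ^ 2) = ((Real.exp (-(c/2) * t ^ 2) : ℝ) : ℂ) := by
      intro t; push_cast; rfl
    simp_rw [h2]
    rw [integral_complex_ofReal, h1, mul_comm, show Real.pi / (c / 2) = 2 * Real.pi / c by field_simp]
  have hmain : Tendsto (fun R => ∫ t, F R t) atTop
      (𝓝 (∫ t : ℝ, Complex.exp (-((c / 2 : ℝ) : ℂ) * t ^ 2) * h 0)) := by
    apply tendsto_integral_filter_of_dominated_convergence (fun t => Real.exp (-κ * t ^ 2) * H)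
    · filter_upwards with R
      apply AEStronglyMeasurable.indicator _ measurableSet_Ioc
      apply Continuous.aestronglyMeasurable
      fun_prop
    · filter_upwards [eventually_gt_atTop 0] with R hR
      filter_upwards with t
      have hs : 0 < Real.sqrt R := Real.sqrt_pos.2 hR
      simp only [hF]
      by_cases ht : t ∈ Set.Ioc (-A * Real.sqrt R) (B * Real.sqrt R)
      · rw [Set.indicator_of_mem ht, norm_mul]
        have hm : t / Real.sqrt R ∈ Set.Icc (-A) B := by
          constructor
          · rw [le_div_iff₀ hs]; exact ht.1.le
          · rw [div_le_iff₀ hs]; exact ht.2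
        apply mul_le_mul _ (hH _ hm) (norm_nonneg _) (Real.exp_pos _).le
        rw [Complex.norm_exp]
        apply Real.exp_le_exp.2
        rw [Complex.re_ofReal_mul]
        calc R * (k (t / Real.sqrt R)).re ≤ R * (-κ * (t / Real.sqrt R) ^ 2) := by
              gcongr; exact hbd _ hm
          _ = -κ * t ^ 2 := by
              rw [div_pow, Real.sq_sqrt hR.le]; field_simp
      · rw [Set.indicator_of_notMem ht]
        simp; positivity
    · exact (integrable_exp_neg_mul_sq hκ).mul_const H
    · filter_upwards with t
      have hsq : Tendsto Real.sqrt atTop atTop := Real.tendsto_sqrt_atTop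
      have hz : Tendsto (fun R => t / Real.sqrt R) atTop (𝓝 0) := hsq.const_div_atTop t
      have hev : ∀ᶠ R in atTop, F R t = Complex.exp (R * k (t / Real.sqrt R)) * h (t / Real.sqrt R) := by
        filter_upwards [eventually_gt_atTop 0, hsq.eventually_gt_atTop (|t| / A),
          hsq.eventually_gt_atTop (|t| / B)] with R hR h1 h2
        simp only [hF]
        apply Set.indicator_of_mem
        rw [div_lt_iff₀ hA] at h1
        rw [div_lt_iff₀ hB] at h2
        constructor
        · linarith [neg_abs_le t]
        · linarith [le_abs_self t]
      refine Tendsto.congr' (EventuallyEq.symm hev) ?_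
      refine Tendsto.mul ?_ ((hh.tendsto 0).comp hz)
      apply (Complex.continuous_exp.tendsto _).comp
      by_cases ht : t = 0
      · subst ht; simp [hk0]
      · have hz' : Tendsto (fun R => t / Real.sqrt R) atTop (𝓝[≠] 0) := by
          rw [tendsto_nhdsWithin_iff]
          refine ⟨hz, ?_⟩
          filter_upwards [eventually_gt_atTop 0] with R hR
          have hs : 0 < Real.sqrt R := Real.sqrt_pos.2 hR
          exact div_ne_zero ht hs.ne'
        have := (hlim.comp hz').mul_const ((t:ℂ)^2)
        have h2 : -((c:ℂ) / 2) * t ^ 2 = -((c / 2 : ℝ) : ℂ) * t ^ 2 := by push_cast; ring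
        rw [h2] at this
        refine this.congr' ?_
        filter_upwards [eventually_gt_atTop 0] with R hR
        have hs : 0 < Real.sqrt R := Real.sqrt_pos.2 hR
        have hsc : ((Real.sqrt R : ℝ) : ℂ) ^ 2 = (R : ℂ) := by
          rw [← Complex.ofReal_pow, Real.sq_sqrt hR.le]
        have htc : (t:ℂ) ≠ 0 := by exact_mod_cast ht
        have hRc : (R:ℂ) ≠ 0 := by exact_mod_cast hR.ne'
        simp only [Function.comp]
        push_cast
        rw [div_pow, hsc]
        field_simp
  rw [hgauss] at hmain
  refine hmain.congr' ?_
  filter_upwards [eventually_gt_atTop 0] with R hR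
  have hs : 0 < Real.sqrt R := Real.sqrt_pos.2 hR
  simp only [hF]
  rw [integral_indicator measurableSet_Ioc, ← intervalIntegral.integral_of_le (by nlinarith)]
  rw [intervalIntegral.integral_comp_div (fun τ => Complex.exp (R * k τ) * h τ) hs.ne']
  rw [mul_div_assoc, mul_div_assoc, div_self hs.ne', mul_one, mul_one]
  simp

lemma exists_kappa (k : ℝ → ℂ) (hk : Continuous k) (c A B : ℝ) (hc : 0 < c) (hA : 0 < A) (hB : 0 < B)
    (hlim : Tendsto (fun τ : ℝ => k τ / τ ^ 2) (𝓝[≠] 0) (𝓝 (-(c / 2))))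
    (hk0 : k 0 = 0)
    (hneg : ∀ τ ∈ Set.Icc (-A) B, τ ≠ 0 → (k τ).re < 0) :
    ∃ κ > 0, ∀ τ ∈ Set.Icc (-A) B, (k τ).re ≤ -κ * τ ^ 2 := by
  set f : ℝ → ℝ := fun τ => (k τ).re / τ ^ 2 with hf
  have hl : Tendsto f (𝓝[≠] 0) (𝓝 (-(c/2))) := by
    have := (Complex.continuous_re.tendsto _).comp hlim
    have h2 : (-((c:ℂ)/2)).re = -(c/2) := by
      rw [show -((c:ℂ)/2) = ((-(c/2) : ℝ) : ℂ) by push_cast; ring]; exact Complex.ofReal_re _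
    rw [h2] at this
    refine this.congr ?_
    intro τ
    simp only [hf, Function.comp]
    rw [show ((τ:ℂ)^2) = ((τ^2 : ℝ) : ℂ) by push_cast; ring, Complex.div_ofReal_re]
  set g := Function.update f 0 (-(c/2)) with hg
  have hgc : ContinuousOn g (Set.Icc (-A) B) := by
    apply Continuous.continuousOn
    rw [continuous_iff_continuousAt]
    intro τ
    by_cases h : τ = 0
    · subst h
      rw [hg, continuousAt_update_same]; exact hl
    · rw [hg, continuousAt_update_of_ne h]
      have : ContinuousAt (fun τ => (k τ).re) τ := (Complex.continuous_re.comp hk).continuousAt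
      exact this.div (by fun_prop) (by positivity)
  obtain ⟨τ0, h0, hmax⟩ := isCompact_Icc.exists_isMaxOn ⟨0, by constructor <;> linarith⟩ hgc
  have hneg0 : g τ0 < 0 := by
    by_cases h : τ0 = 0
    · rw [h, hg, Function.update_self]; linarith
    · rw [hg, Function.update_of_ne h]
      exact div_neg_of_neg_of_pos (hneg τ0 h0 h) (by positivity)
  refine ⟨-g τ0, by linarith, ?_⟩
  intro τ hτ
  by_cases h : τ = 0
  · subst h; simp [hk0]
  · have h1 : g τ ≤ g τ0 := hmax hτ
    rw [hg, Function.update_of_ne h] at h1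
    simp only [hf] at h1
    rw [div_le_iff₀ (by positivity)] at h1
    simpa using h1


noncomputable def phi (b : ℝ) : ℝ := Real.pi / (1 + b)

noncomputable def GG (b : ℝ) (w : ℂ) : ℂ := Complex.exp w - Complex.exp (-(b * w)) / b

noncomputable def dir (b : ℝ) : ℂ := (Real.sin (phi b / 2) : ℝ) + (Real.cos (phi b / 2) : ℝ) * Complex.I

noncomputable def kk (b : ℝ) (τ : ℝ) : ℂ :=
  GG b (phi b * Complex.I + τ * dir b) - GG b (phi b * Complex.I)

lemma phi_eq (b : ℝ) (hb : 0 < b) : (1 + b) * phi b = Real.pi := by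
  unfold phi; field_simp
lemma phi_pos (b : ℝ) (hb : 0 < b) : 0 < phi b := by
  unfold phi; have := Real.pi_pos; positivity
lemma phi_lt (b : ℝ) (hb : 0 < b) : phi b < Real.pi := by
  have h1 := phi_eq b hb
  have h2 := phi_pos b hb
  nlinarith
lemma sinh2_pos (b : ℝ) (hb : 0 < b) : 0 < Real.sin (phi b / 2) :=
  Real.sin_pos_of_pos_of_lt_pi (by linarith [phi_pos b hb]) (by linarith [phi_lt b hb, phi_pos b hb])
lemma cosh2_pos (b : ℝ) (hb : 0 < b) : 0 < Real.cos (phi b / 2) :=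
  Real.cos_pos_of_mem_Ioo ⟨by linarith [phi_pos b hb, Real.pi_pos], by linarith [phi_lt b hb]⟩

lemma GG_re (b : ℝ) (w : ℂ) : (GG b w).re =
    Real.exp w.re * Real.cos w.im - Real.exp (-(b * w.re)) * Real.cos (b * w.im) / b := by
  unfold GG
  rw [Complex.sub_re, Complex.exp_re, Complex.div_ofReal_re, Complex.exp_re]
  simp

lemma exp_neg_b_phi (b : ℝ) (hb : 0 < b) :
    Complex.exp (-(b * (phi b * Complex.I))) = - Complex.exp (phi b * Complex.I) := by
  have h := phi_eq b hb
  have : -((b:ℂ) * (phi b * Complex.I)) = phi b * Complex.I - Real.pi * Complex.I := by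
    rw [← h]; push_cast; ring
  rw [this, Complex.exp_sub, Complex.exp_pi_mul_I]; ring

lemma GG_saddle (b : ℝ) (hb : 0 < b) :
    GG b (phi b * Complex.I) = (1 + 1 / b) * Complex.exp (phi b * Complex.I) := by
  unfold GG
  rw [exp_neg_b_phi b hb]; ring

lemma dir_sq (b : ℝ) : Complex.exp (phi b * Complex.I) * dir b ^ 2 = -1 := by
  have h1 : dir b = Complex.I * Complex.exp (-(phi b / 2 : ℝ) * Complex.I) := by
    unfold dir
    rw [Complex.exp_mul_I, ← Complex.ofReal_neg, ← Complex.ofReal_cos, ← Complex.ofReal_sin]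
    simp only [Real.cos_neg, Real.sin_neg]
    push_cast
    linear_combination (Complex.sin (phi b / 2)) * Complex.I_sq
  rw [h1, mul_pow, ← Complex.exp_nat_mul, Complex.I_sq]
  have : Complex.exp (phi b * Complex.I) * (-1 * Complex.exp ((2:ℕ) * (-(phi b / 2 : ℝ) * Complex.I)))
    = -(Complex.exp (phi b * Complex.I) * Complex.exp ((2:ℕ) * (-(phi b / 2 : ℝ) * Complex.I))) := by ring
  rw [this, ← Complex.exp_add]
  have : (phi b * Complex.I) + ((2:ℕ) * (-(phi b / 2 : ℝ) * Complex.I)) = 0 := by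
    push_cast; ring
  rw [this]; simp

lemma kk_eq (b : ℝ) (hb : 0 < b) (τ : ℝ) : kk b τ = Complex.exp (phi b * Complex.I) *
    ((Complex.exp (τ * dir b) - 1) + (Complex.exp (-(b * (τ * dir b))) - 1) / b) := by
  unfold kk
  rw [GG_saddle b hb]
  unfold GG
  rw [mul_add, neg_add, Complex.exp_add, Complex.exp_add, exp_neg_b_phi b hb]
  ring

lemma kk_cont (b : ℝ) : Continuous (kk b) := by
  unfold kk GG; fun_prop

lemma kk_zero (b : ℝ) : kk b 0 = 0 := by
  unfold kk; simp

lemma exp_quad (u : ℂ) (hu : ‖u‖ ≤ 1) : ‖Complex.exp u - 1 - u - u ^ 2 / 2‖ ≤ ‖u‖ ^ 3 := by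
  have h := Complex.exp_bound hu (n := 3) (by norm_num)
  simp [Finset.sum_range_succ, Nat.factorial] at h
  have h2 : Complex.exp u - 1 - u - u ^ 2 / 2 = Complex.exp u - (1 + u + u ^ 2 / 2) := by ring
  rw [h2]
  refine h.trans ?_
  have : 0 ≤ ‖u‖ ^ 3 := by positivity
  nlinarith

lemma exp_quad_lim (d : ℂ) :
    Tendsto (fun τ : ℝ => (Complex.exp (τ * d) - 1 - τ * d) / τ ^ 2) (𝓝[≠] 0) (𝓝 (d ^ 2 / 2)) := by
  rw [tendsto_iff_norm_sub_tendsto_zero]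
  have hb : Tendsto (fun τ : ℝ => |τ| * ‖d‖ ^ 3) (𝓝[≠] 0) (𝓝 0) := by
    have : Continuous (fun τ : ℝ => |τ| * ‖d‖ ^ 3) := by fun_prop
    have h := (this.tendsto 0).mono_left (nhdsWithin_le_nhds (s := {0}ᶜ))
    simpa using h
  refine squeeze_zero' (Eventually.of_forall fun _ => norm_nonneg _) ?_ hb
  have hsm : ∀ᶠ τ : ℝ in 𝓝[≠] 0, ‖(τ:ℂ) * d‖ ≤ 1 := by
    have : Continuous (fun τ : ℝ => ‖(τ:ℂ) * d‖) := by fun_prop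
    have h := (this.tendsto 0).mono_left (nhdsWithin_le_nhds (s := {0}ᶜ))
    have h2 : ‖((0:ℝ):ℂ) * d‖ < 1 := by simp
    exact (h.eventually_lt_const h2).mono fun _ h => h.le
  filter_upwards [hsm, self_mem_nhdsWithin] with τ h1 h2
  have hτ : (τ:ℂ) ≠ 0 := by exact_mod_cast h2
  have hτ' : 0 < |τ| := abs_pos.2 h2
  have h3 := exp_quad _ h1
  have h4 : (Complex.exp (τ * d) - 1 - τ * d) / τ ^ 2 - d ^ 2 / 2 =
      (Complex.exp (τ * d) - 1 - τ * d - (τ * d) ^ 2 / 2) / τ ^ 2 := by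
    field_simp
  rw [h4, norm_div, norm_pow, Complex.norm_real, Real.norm_eq_abs, div_le_iff₀ (by positivity)]
  refine h3.trans (le_of_eq ?_)
  rw [norm_mul, Complex.norm_real, Real.norm_eq_abs]; ring

lemma kk_lim (b : ℝ) (hb : 0 < b) :
    Tendsto (fun τ : ℝ => kk b τ / τ ^ 2) (𝓝[≠] 0) (𝓝 (-(((1 + b : ℝ) : ℂ) / 2))) := by
  have h1 := exp_quad_lim (dir b)
  have h2 := (exp_quad_lim (-(b * dir b))).div_const (b:ℂ)
  have h3 := (h1.add h2).const_mul (Complex.exp (phi b * Complex.I))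
  have hbc : (b:ℂ) ≠ 0 := by exact_mod_cast hb.ne'
  have h4 : Complex.exp (phi b * Complex.I) * (dir b ^ 2 / 2 + (-(b * dir b)) ^ 2 / 2 / b)
      = -(((1 + b : ℝ) : ℂ) / 2) := by
    have := dir_sq b
    field_simp
    push_cast
    linear_combination (1 + b) * this
  rw [h4] at h3
  refine h3.congr ?_
  intro τ
  rw [kk_eq b hb]
  have : (τ:ℂ) * (-(b * dir b)) = -(b * (τ * dir b)) := by ring
  rw [this]
  field_simp
  ring

noncomputable def qq (b τ : ℝ) : ℝ :=
  Real.exp (τ * Real.sin (phi b / 2)) * Real.cos (phi b + τ * Real.cos (phi b / 2))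
   - Real.exp (-(b * (τ * Real.sin (phi b / 2)))) * Real.cos (b * (phi b + τ * Real.cos (phi b / 2))) / b

lemma dir_re (b : ℝ) : (dir b).re = Real.sin (phi b / 2) := by
  unfold dir
  simp [-Complex.ofReal_sin, -Complex.ofReal_cos]
lemma dir_im (b : ℝ) : (dir b).im = Real.cos (phi b / 2) := by
  unfold dir
  simp [-Complex.ofReal_sin, -Complex.ofReal_cos]

lemma kk_re (b τ : ℝ) : (kk b τ).re = qq b τ - qq b 0 := by
  unfold kk
  rw [Complex.sub_re, GG_re, GG_re]
  unfold qq
  simp [dir_re, dir_im]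

lemma qq_deriv (b τ : ℝ) (hb : 0 < b) : HasDerivAt (qq b)
    (-(Real.exp (τ * Real.sin (phi b / 2)) * Real.sin (phi b / 2 + τ * Real.cos (phi b / 2)))
      + Real.exp (-(b * (τ * Real.sin (phi b / 2)))) *
        Real.sin (phi b / 2 + b * (phi b + τ * Real.cos (phi b / 2)))) τ := by
  set s := Real.sin (phi b / 2) with hs
  set c := Real.cos (phi b / 2) with hc
  have hr : HasDerivAt (fun τ : ℝ => τ * s) s τ := by simpa using (hasDerivAt_id τ).mul_const s
  have hψ : HasDerivAt (fun τ : ℝ => phi b + τ * c) c τ := by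
    simpa using ((hasDerivAt_id τ).mul_const c).const_add (phi b)
  have h1 := hr.exp.mul hψ.cos
  have h2 := (((hr.const_mul b).neg.exp).mul (hψ.const_mul b).cos).div_const b
  have h3 := h1.sub h2
  unfold qq
  refine h3.congr_deriv ?_
  have e1 : Real.sin (phi b / 2 + τ * c) = Real.sin (phi b + τ * c) * c - Real.cos (phi b + τ * c) * s := by
    rw [hs, hc, ← Real.sin_sub]; congr 1; ring
  have e2 : Real.sin (phi b / 2 + b * (phi b + τ * c)) =
      s * Real.cos (b * (phi b + τ * c)) + c * Real.sin (b * (phi b + τ * c)) := by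
    rw [Real.sin_add]
  rw [e1, e2]
  simp only [Pi.neg_apply]
  field_simp
  ring

/-- upper end of the spiral -/
noncomputable def psi1 (b : ℝ) : ℝ := min (2 * phi b) Real.pi
noncomputable def AA (b : ℝ) : ℝ := phi b / Real.cos (phi b / 2)
noncomputable def BB (b : ℝ) : ℝ := (psi1 b - phi b) / Real.cos (phi b / 2)

lemma AA_pos (b : ℝ) (hb : 0 < b) : 0 < AA b := div_pos (phi_pos b hb) (cosh2_pos b hb)
lemma BB_pos (b : ℝ) (hb : 0 < b) : 0 < BB b := by
  apply div_pos _ (cosh2_pos b hb)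
  unfold psi1
  have : phi b < min (2 * phi b) Real.pi := lt_min (by linarith [phi_pos b hb]) (phi_lt b hb)
  linarith

lemma sin_ge_of (y x : ℝ) (hy0 : 0 ≤ y) (hy : y ≤ Real.pi / 2) (h1 : y ≤ x) (h2 : x ≤ Real.pi - y) :
    Real.sin y ≤ Real.sin x := by
  rcases le_or_gt x (Real.pi / 2) with h | h
  · exact Real.sin_le_sin_of_le_of_le_pi_div_two (by linarith) h h1
  · rw [← Real.sin_pi_sub x]
    exact Real.sin_le_sin_of_le_of_le_pi_div_two (by linarith) (by linarith) (by linarith)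

lemma sin_ge_neg (y x : ℝ) (hy0 : 0 ≤ y) (hy : y ≤ Real.pi / 2) (h1 : -y ≤ x) (h2 : x ≤ Real.pi + y) :
    -Real.sin y ≤ Real.sin x := by
  rw [← Real.sin_neg]
  rcases le_or_gt x (Real.pi / 2) with h | h
  · exact Real.sin_le_sin_of_le_of_le_pi_div_two (by linarith) h h1
  · rw [← Real.sin_pi_sub x]
    exact Real.sin_le_sin_of_le_of_le_pi_div_two (by linarith) (by linarith) (by linarith)

lemma qq_mono (b : ℝ) (hb : 0 < b) : StrictMonoOn (qq b) (Set.Icc (-(AA b)) 0) := by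
  have hφ := phi_eq b hb
  have hφ0 := phi_pos b hb
  have hφ1 := phi_lt b hb
  have hs := sinh2_pos b hb
  have hc := cosh2_pos b hb
  apply strictMonoOn_of_deriv_pos (convex_Icc _ _)
  · exact fun τ _ => (qq_deriv b τ hb).continuousAt.continuousWithinAt
  · intro τ hτ
    rw [interior_Icc] at hτ
    rw [(qq_deriv b τ hb).deriv]
    have hA : -(phi b) < τ * Real.cos (phi b / 2) := by
      have := hτ.1
      unfold AA at this
      rw [← neg_div, div_lt_iff₀ hc] at this
      exact this
    have hτ0 : τ < 0 := hτ.2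
    set δ := τ * Real.cos (phi b / 2)
    have hδ : δ < 0 := mul_neg_of_neg_of_pos hτ0 hc
    have hr : τ * Real.sin (phi b / 2) < 0 := mul_neg_of_neg_of_pos hτ0 hs
    set r := τ * Real.sin (phi b / 2)
    have k1 : Real.sin (phi b / 2) ≤ Real.sin (phi b / 2 + b * (phi b + δ)) := by
      apply sin_ge_of
      · linarith
      · linarith
      · nlinarith
      · nlinarith
    have k2 : Real.sin (phi b / 2 + δ) ≤ Real.sin (phi b / 2) :=
      Real.sin_le_sin_of_le_of_le_pi_div_two (by linarith) (by linarith) (by linarith)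
    have k3 : Real.exp r < 1 := (by simpa using Real.exp_lt_exp.2 hr)
    have k4 : 1 < Real.exp (-(b * r)) := Real.one_lt_exp_iff.2 (by nlinarith)
    have k5 := Real.exp_pos r
    nlinarith

lemma qq_anti (b : ℝ) (hb : 0 < b) : StrictAntiOn (qq b) (Set.Icc 0 (BB b)) := by
  have hφ := phi_eq b hb
  have hφ0 := phi_pos b hb
  have hφ1 := phi_lt b hb
  have hs := sinh2_pos b hb
  have hc := cosh2_pos b hb
  apply strictAntiOn_of_deriv_neg (convex_Icc _ _)
  · exact fun τ _ => (qq_deriv b τ hb).continuousAt.continuousWithinAt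
  · intro τ hτ
    rw [interior_Icc] at hτ
    rw [(qq_deriv b τ hb).deriv]
    have hB : τ * Real.cos (phi b / 2) < psi1 b - phi b := by
      have := hτ.2
      unfold BB at this
      rw [lt_div_iff₀ hc] at this
      exact this
    have hp1 : psi1 b ≤ 2 * phi b := min_le_left _ _
    have hp2 : psi1 b ≤ Real.pi := min_le_right _ _
    have hτ0 : 0 < τ := hτ.1
    set δ := τ * Real.cos (phi b / 2)
    have hδ : 0 < δ := mul_pos hτ0 hc
    have hr : 0 < τ * Real.sin (phi b / 2) := mul_pos hτ0 hs
    set r := τ * Real.sin (phi b / 2)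
    have k1 : Real.sin (phi b / 2) ≤ Real.sin (phi b / 2 + δ) := by
      apply sin_ge_of <;> linarith
    have k2 : Real.sin (phi b / 2 + b * (phi b + δ)) ≤ Real.sin (phi b / 2) := by
      have := sin_ge_neg (phi b / 2) (phi b / 2 + b * (phi b + δ) - Real.pi) (by linarith)
        (by linarith) (by nlinarith) (by nlinarith)
      rw [Real.sin_sub_pi] at this
      linarith
    have k3 : 1 < Real.exp r := Real.one_lt_exp_iff.2 hr
    have k4 : Real.exp (-(b * r)) < 1 := (by rw [← Real.exp_zero]; exact Real.exp_lt_exp.2 (by nlinarith))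
    have k5 := Real.exp_pos (-(b * r))
    nlinarith

lemma kk_neg (b : ℝ) (hb : 0 < b) (τ : ℝ) (hτ : τ ∈ Set.Icc (-(AA b)) (BB b)) (h0 : τ ≠ 0) :
    (kk b τ).re < 0 := by
  rw [kk_re]
  have hA := AA_pos b hb
  have hB := BB_pos b hb
  rcases lt_or_gt_of_ne h0 with h | h
  · have := qq_mono b hb ⟨hτ.1, h.le⟩ ⟨by linarith, le_refl 0⟩ h
    linarith
  · have := qq_anti b hb ⟨le_refl 0, hB.le⟩ ⟨h.le, hτ.2⟩ h
    linarith


noncomputable def rr1 (b : ℝ) : ℝ := BB b * Real.sin (phi b / 2)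
noncomputable def MM (b : ℝ) : ℝ := (1 + 1 / b) * Real.cos (phi b)
noncomputable def SS (b : ℝ) : ℝ := (1 + 1 / b) * Real.sin (phi b)

lemma rr1_pos (b : ℝ) (hb : 0 < b) : 0 < rr1 b := mul_pos (BB_pos b hb) (sinh2_pos b hb)

lemma spiral_end (b : ℝ) (hb : 0 < b) :
    phi b * Complex.I + BB b * dir b = rr1 b + psi1 b * Complex.I := by
  have hc := (cosh2_pos b hb).ne'
  have : BB b * Real.cos (phi b / 2) = psi1 b - phi b := by unfold BB; field_simp
  apply Complex.ext
  · simp [dir_re, rr1, -Complex.ofReal_sin]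
  · simp [dir_im, this]

lemma spiral_start (b : ℝ) (hb : 0 < b) :
    phi b * Complex.I + (-(AA b) : ℝ) * dir b = ((-(AA b) * Real.sin (phi b / 2) : ℝ) : ℂ) := by
  have hc := (cosh2_pos b hb).ne'
  have : AA b * Real.cos (phi b / 2) = phi b := by unfold AA; field_simp
  apply Complex.ext
  · simp [dir_re, -Complex.ofReal_sin]
  · simp [dir_im, this, -Complex.ofReal_sin]

lemma GG_saddle_re (b : ℝ) (hb : 0 < b) : (GG b (phi b * Complex.I)).re = MM b := by
  rw [GG_saddle b hb]
  have : (1 + 1 / (b:ℂ)) = ((1 + 1 / b : ℝ) : ℂ) := by push_cast; rfl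
  rw [this, Complex.re_ofReal_mul, Complex.exp_ofReal_mul_I_re]; rfl

lemma GG_saddle_im (b : ℝ) (hb : 0 < b) : (GG b (phi b * Complex.I)).im = SS b := by
  rw [GG_saddle b hb]
  have : (1 + 1 / (b:ℂ)) = ((1 + 1 / b : ℝ) : ℂ) := by push_cast; rfl
  rw [this, Complex.im_ofReal_mul, Complex.exp_ofReal_mul_I_im]; rfl

lemma exp_tan_bound (p : ℝ) (h0 : 0 < p) (h1 : p < Real.pi / 2) :
    Real.exp (p * (Real.sin (p / 2) / Real.cos (p / 2))) ≤ 1 / Real.cos p := by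
  have hs : 0 < Real.sin (p / 2) := Real.sin_pos_of_pos_of_lt_pi (by linarith) (by linarith)
  have hc : 0 < Real.cos (p / 2) := Real.cos_pos_of_mem_Ioo ⟨by linarith, by linarith⟩
  have hcp : 0 < Real.cos p := Real.cos_pos_of_mem_Ioo ⟨by linarith, by linarith⟩
  have ht : p / 2 ≤ Real.sin (p / 2) / Real.cos (p / 2) := by
    rw [← Real.tan_eq_sin_div_cos]; exact Real.le_tan (by linarith) (by linarith)
  have hd : Real.cos p = Real.cos (p / 2) ^ 2 - Real.sin (p / 2) ^ 2 := by
    rw [← Real.cos_two_mul']; congr 1; ring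
  set t := Real.sin (p / 2) / Real.cos (p / 2) with htd
  have ht0 : 0 < t := div_pos hs hc
  have hu : t ^ 2 < 1 := by
    rw [htd, div_pow, div_lt_one (by positivity)]; linarith
  have hq : 1 / Real.cos p = (1 + t ^ 2) / (1 - t ^ 2) := by
    have h3 : (1 + t ^ 2) = 1 / Real.cos (p / 2) ^ 2 := by
      rw [htd]; field_simp; linarith [Real.sin_sq_add_cos_sq (p / 2)]
    have h4 : (1 - t ^ 2) = Real.cos p / Real.cos (p / 2) ^ 2 := by
      rw [htd, hd]; field_simp
    rw [h3, h4]; field_simp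
  rw [hq, ← Real.exp_log (x := (1 + t ^ 2) / (1 - t ^ 2)) (div_pos (by positivity) (by linarith))]
  apply Real.exp_le_exp.2
  rw [Real.log_div (by positivity) (by linarith)]
  have hab : |t ^ 2| < 1 := by rw [abs_of_nonneg (by positivity)]; exact hu
  have hS := Real.hasSum_log_sub_log_of_abs_lt_one hab
  have := le_hasSum hS 0 (fun i _ => by positivity)
  simp at this
  nlinarith

lemma vert_lt (b : ℝ) (hb : 0 < b) (ψ : ℝ) (h1 : psi1 b ≤ ψ) (h2 : ψ ≤ Real.pi) :
    (GG b (rr1 b + ψ * Complex.I)).re < MM b := by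
  rcases le_or_gt b 1 with hb1 | hb1
  · have hφ := phi_eq b hb
    have hp : psi1 b = Real.pi := min_eq_right (by nlinarith [phi_pos b hb])
    have : ψ = psi1 b := by linarith
    rw [this, ← spiral_end b hb]
    have hk := kk_neg b hb (BB b) ⟨by linarith [AA_pos b hb, BB_pos b hb], le_refl _⟩ (BB_pos b hb).ne'
    unfold kk at hk
    rw [Complex.sub_re, GG_saddle_re b hb] at hk
    linarith
  · have hφ := phi_eq b hb
    have hφ0 := phi_pos b hb
    have h2φ : 2 * phi b < Real.pi := by nlinarith
    have hp : psi1 b = 2 * phi b := min_eq_left h2φ.le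
    have hr : rr1 b = phi b * (Real.sin (phi b / 2) / Real.cos (phi b / 2)) := by
      unfold rr1 BB; rw [hp]; ring
    have hr0 := rr1_pos b hb
    rw [GG_re]
    simp only [Complex.add_re, Complex.add_im, Complex.ofReal_re, Complex.ofReal_im, Complex.mul_re,
      Complex.mul_im, Complex.I_re, Complex.I_im, mul_zero, mul_one, sub_zero, zero_add, add_zero]
    have hcos : Real.cos ψ ≤ Real.cos (2 * phi b) :=
      Real.cos_le_cos_of_nonneg_of_le_pi (by linarith) h2 (by linarith)
    set c := Real.cos (phi b) with hcd
    have hc0 : 0 < c := Real.cos_pos_of_mem_Ioo ⟨by linarith, by linarith⟩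
    have hc1 : c < 1 := by
      rw [hcd, ← Real.cos_zero]
      exact Real.cos_lt_cos_of_nonneg_of_le_pi (le_refl _) (by linarith) hφ0
    have hc2 : Real.cos (2 * phi b) = 2 * c ^ 2 - 1 := Real.cos_two_mul _
    have hρ : Real.exp (rr1 b) ≤ 1 / c := by rw [hr]; exact exp_tan_bound _ hφ0 (by linarith)
    have hρ1 : 1 ≤ Real.exp (rr1 b) := Real.one_le_exp hr0.le
    have hbi : 1 / b < 1 := by rw [div_lt_one hb]; exact hb1
    have hbi0 : 0 < 1 / b := by positivity
    have he : -(Real.exp (-(b * rr1 b)) * Real.cos (b * ψ) / b) ≤ 1 / b := by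
      rw [← neg_div]
      apply div_le_div_of_nonneg_right _ hb.le
      have e1 : Real.exp (-(b * rr1 b)) ≤ 1 := by
        rw [← Real.exp_zero]; exact Real.exp_le_exp.2 (by nlinarith)
      have e2 := Real.exp_pos (-(b * rr1 b))
      have e3 := Real.neg_one_le_cos (b * ψ)
      nlinarith
    have hM : MM b = (1 + 1 / b) * c := rfl
    rw [hM]
    set i := 1 / b
    have hfirst : Real.exp (rr1 b) * Real.cos ψ ≤ Real.exp (rr1 b) * (2 * c ^ 2 - 1) := by
      rw [← hc2]; gcongr
    have goal2 : Real.exp (rr1 b) * (2 * c ^ 2 - 1) + i < (1 + i) * c := by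
      rcases le_or_gt 0 (2 * c ^ 2 - 1) with h | h
      · have e1 : Real.exp (rr1 b) * (2 * c ^ 2 - 1) ≤ 1 / c * (2 * c ^ 2 - 1) := by gcongr
        have e2 : 1 / c * (2 * c ^ 2 - 1) = 2 * c - 1 / c := by field_simp
        have e3 : 1 < 1 / c := by rw [lt_div_iff₀ hc0]; linarith
        have e4 : c - 1 / c = -((1 - c) * (1 + 1 / c)) := by field_simp; ring
        nlinarith [mul_pos (sub_pos.2 hc1) (sub_pos.2 hbi)]
      · nlinarith [mul_pos (sub_pos.2 hc1) (sub_pos.2 hbi), mul_pos (sub_pos.2 hc1) hc0]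
    linarith

lemma GG_pi_re (b r : ℝ) : (GG b (r + Real.pi * Complex.I)).re =
    - Real.exp r - Real.exp (-(b * r)) * Real.cos (b * Real.pi) / b := by
  rw [GG_re]; simp

lemma horiz_le (b : ℝ) (hb : 0 < b) (r : ℝ) (hr : rr1 b ≤ r) :
    (GG b (r + Real.pi * Complex.I)).re ≤ (GG b (rr1 b + Real.pi * Complex.I)).re := by
  rw [GG_pi_re, GG_pi_re]
  have h0 := rr1_pos b hb
  set r1 := rr1 b
  have e1 : r - r1 ≤ Real.exp r - Real.exp r1 := by
    have : Real.exp r = Real.exp r1 * Real.exp (r - r1) := by rw [← Real.exp_add]; congr 1; ring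
    rw [this]
    nlinarith [Real.add_one_le_exp (r - r1), Real.one_le_exp h0.le]
  have e2 : Real.exp (-(b * r1)) - Real.exp (-(b * r)) ≤ b * (r - r1) := by
    have : Real.exp (-(b * r)) = Real.exp (-(b * r1)) * Real.exp (-(b * (r - r1))) := by
      rw [← Real.exp_add]; congr 1; ring
    rw [this]
    have h3 : Real.exp (-(b * r1)) ≤ 1 := by
      rw [← Real.exp_zero]; exact Real.exp_le_exp.2 (by nlinarith)
    have h4 := Real.add_one_le_exp (-(b * (r - r1)))
    have h5 := Real.exp_pos (-(b * r1))
    have h6 : 0 ≤ b * (r - r1) := mul_nonneg hb.le (by linarith)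
    nlinarith
  have e3 : Real.exp (-(b * r)) ≤ Real.exp (-(b * r1)) := Real.exp_le_exp.2 (by nlinarith)
  have e4 : (Real.exp (-(b * r1)) - Real.exp (-(b * r))) * Real.cos (b * Real.pi) ≤ b * (r - r1) := by
    nlinarith [Real.cos_le_one (b * Real.pi)]
  have e5 : ((Real.exp (-(b * r1)) - Real.exp (-(b * r))) * Real.cos (b * Real.pi)) / b ≤ r - r1 := by
    rw [div_le_iff₀ hb]; linarith
  have e6 : ((Real.exp (-(b * r1)) - Real.exp (-(b * r))) * Real.cos (b * Real.pi)) / b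
    = Real.exp (-(b * r1)) * Real.cos (b * Real.pi) / b - Real.exp (-(b * r)) * Real.cos (b * Real.pi) / b := by ring
  linarith

lemma tail_eta (b : ℝ) (hb : 0 < b) : ∃ η > 0,
    (∀ ψ ∈ Set.Icc (psi1 b) Real.pi, (GG b (rr1 b + ψ * Complex.I)).re ≤ MM b - η) ∧
    (∀ r, rr1 b ≤ r → (GG b (r + Real.pi * Complex.I)).re ≤ MM b - η) := by
  have hne : (Set.Icc (psi1 b) Real.pi).Nonempty := ⟨Real.pi, min_le_right _ _, le_refl _⟩
  have hc : Continuous (fun ψ : ℝ => (GG b (rr1 b + ψ * Complex.I)).re) := by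
    apply Complex.continuous_re.comp; unfold GG; fun_prop
  obtain ⟨p, hp, hmax⟩ := isCompact_Icc.exists_isMaxOn hne hc.continuousOn
  refine ⟨MM b - (GG b (rr1 b + p * Complex.I)).re, ?_, ?_, ?_⟩
  · have := vert_lt b hb p hp.1 hp.2
    linarith
  · intro ψ hψ
    have := hmax hψ
    simp only [Set.mem_ofPred_eq] at this
    linarith
  · intro r hr
    have h1 := horiz_le b hb r hr
    have := hmax (⟨min_le_right _ _, le_refl _⟩ : Real.pi ∈ Set.Icc (psi1 b) Real.pi)
    simp only [Set.mem_ofPred_eq] at this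
    linarith


noncomputable def PP (a b R : ℝ) (w : ℂ) : ℂ := Complex.exp (R * GG b w + (1 - a) * w)

lemma PP_norm (a b R : ℝ) (w : ℂ) : ‖PP a b R w‖ = Real.exp (R * (GG b w).re + (1 - a) * w.re) := by
  unfold PP
  rw [Complex.norm_exp]
  have : (1 - (a:ℂ)) = ((1 - a : ℝ) : ℂ) := by push_cast; rfl
  rw [this, Complex.add_re, Complex.re_ofReal_mul, Complex.re_ofReal_mul]

lemma PP_diff (a b R : ℝ) : Differentiable ℂ (PP a b R) := by
  unfold PP GG; fun_prop

lemma PP_real (a b R r : ℝ) : (PP a b R r).im = 0 := by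
  have : PP a b R r = ((Real.exp (R * (Real.exp r - Real.exp (-(b * r)) / b) + (1 - a) * r) : ℝ) : ℂ) := by
    unfold PP GG; push_cast; rfl
  rw [this, Complex.ofReal_im]

lemma hank_shift (f : ℂ → ℂ) (r0 L : ℝ) : hank f (L + r0) = hank (fun w => f (w + L)) r0 := by
  unfold hank
  congr 1
  · congr 1; ext ψ; congr 2; push_cast; ring
  · have h := (measurePreserving_add_left (volume : Measure ℝ) L).setIntegral_preimage_emb
      (measurableEmbedding_addLeft L) (fun r : ℝ => f (r + Real.pi * Complex.I)) (Set.Ioi (L + r0))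
    rw [← h]
    have : (fun x => L + x) ⁻¹' Set.Ioi (L + r0) = Set.Ioi r0 := by ext; simp
    rw [this]
    congr 1; ext r; congr 1; push_cast; ring

lemma WW_scale (a b R : ℝ) (hb : 0 < b) (hR : 0 < R) (w : ℂ) :
    WW a b (R ^ (1 + b) / b) (w + Real.log R) = (R ^ (1 - a) : ℝ) * PP a b R w := by
  unfold WW PP GG
  have h1 : ((R ^ (1 - a) : ℝ) : ℂ) = Complex.exp ((1 - a) * Real.log R) := by
    rw [Real.rpow_def_of_pos hR]; push_cast; congr 1; ring
  have h2 : ((R ^ (1 + b) : ℝ) : ℂ) = Complex.exp ((1 + b) * Real.log R) := by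
    rw [Real.rpow_def_of_pos hR]; push_cast; congr 1; ring
  have h3 : (R : ℂ) = Complex.exp (Real.log R) := by
    rw [← Complex.ofReal_exp, Real.exp_log hR]
  rw [h1, ← Complex.exp_add]
  congr 1
  have h4 : Complex.exp (w + Real.log R) = R * Complex.exp w := by rw [Complex.exp_add, ← h3]; ring
  have h5 : ((R ^ (1 + b) / b : ℝ) : ℂ) * Complex.exp (-(b * (w + Real.log R))) =
      R * (Complex.exp (-(b * w)) / b) := by
    rw [Complex.ofReal_div, h2, h3, div_mul_eq_mul_div, ← Complex.exp_add, mul_div_assoc', ← Complex.exp_add]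
    congr 2
    ring
  rw [h4, h5]; ring

lemma hank_const (c : ℝ) (f : ℂ → ℂ) (r0 : ℝ) : hank (fun w => c * f w) r0 = c * hank f r0 := by
  unfold hank
  rw [integral_const_mul, mul_add, ← intervalIntegral.integral_const_mul]
  congr 2; ext ψ; ring

lemma wright_PP (a b R : ℝ) (ha : 0 < a) (hb : 0 < b) (hR : 0 < R) (r1 : ℝ) :
    wrightJ a b (R ^ (1 + b) / b) = R ^ (1 - a) / Real.pi * (hank (PP a b R) r1).im := by
  rw [wright_rep a b _ (Real.log R + r1) ha hb, hank_shift]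
  have : (fun w : ℂ => WW a b (R ^ (1 + b) / b) (w + Real.log R)) =
      fun w => (R ^ (1 - a) : ℝ) * PP a b R w := by
    ext w; exact WW_scale a b R hb hR w
  rw [this, hank_const, Complex.im_ofReal_mul]; ring

noncomputable def spir (a b R : ℝ) : ℂ :=
  ∫ τ in (-(AA b))..(BB b), Complex.exp (R * kk b τ) * Complex.exp ((1 - a) * (τ * dir b))

noncomputable def tailv (a b R : ℝ) : ℂ :=
  (((rr1 b + Real.pi * Complex.I) - (rr1 b + psi1 b * Complex.I)) *
     (∫ t : ℝ in (0:ℝ)..1, PP a b R ((rr1 b + psi1 b * Complex.I) +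
        t * ((rr1 b + Real.pi * Complex.I) - (rr1 b + psi1 b * Complex.I)))) +
    ∫ r : ℝ in Set.Ioi (rr1 b), PP a b R (r + Real.pi * Complex.I))

lemma PP_spiral (a b R τ : ℝ) : PP a b R (phi b * Complex.I + τ * dir b) =
    Complex.exp (R * GG b (phi b * Complex.I)) * Complex.exp ((1 - a) * (phi b * Complex.I)) *
      (Complex.exp (R * kk b τ) * Complex.exp ((1 - a) * (τ * dir b))) := by
  unfold PP kk
  rw [← Complex.exp_add, ← Complex.exp_add, ← Complex.exp_add]
  congr 1; ring

lemma hank_PP (a b R : ℝ) (hb : 0 < b) : (hank (PP a b R) (rr1 b)).im =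
    (Complex.exp (R * GG b (phi b * Complex.I)) * Complex.exp ((1 - a) * (phi b * Complex.I)) *
      (dir b * spir a b R) + tailv a b R).im := by
  rw [hank_general (PP a b R) (PP_diff a b R) (PP_real a b R)
    (phi b * Complex.I + (-(AA b) : ℝ) * dir b) (rr1 b + psi1 b * Complex.I) (rr1 b) _ (spiral_start b hb)]
  rw [add_assoc, ← tailv]
  congr 2
  rw [← spiral_end b hb]
  have e : ∀ t : ℝ, (phi b * Complex.I + (-(AA b) : ℝ) * dir b + t *
      (phi b * Complex.I + BB b * dir b - (phi b * Complex.I + (-(AA b) : ℝ) * dir b)) : ℂ)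
      = phi b * Complex.I + ((-(AA b) + (AA b + BB b) * t : ℝ) : ℂ) * dir b := by
    intro t; push_cast; ring
  simp_rw [e]
  have h := intervalIntegral.smul_integral_comp_add_mul (a := 0) (b := 1)
    (fun τ : ℝ => PP a b R (phi b * Complex.I + τ * dir b)) (AA b + BB b) (-(AA b))
  have e2 : -(AA b) + (AA b + BB b) * 1 = BB b := by ring
  rw [e2, mul_zero, add_zero] at h
  have e3 : (phi b * Complex.I + BB b * dir b - (phi b * Complex.I + (-(AA b) : ℝ) * dir b) : ℂ) =
    dir b * ((AA b + BB b : ℝ) : ℂ) := by push_cast; ring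
  rw [e3, mul_assoc, ← Complex.real_smul, h]
  simp_rw [PP_spiral]
  rw [intervalIntegral.integral_const_mul, spir]
  ring

lemma spir_lim (a b : ℝ) (hb : 0 < b) :
    Tendsto (fun R : ℝ => (√R : ℂ) * spir a b R) atTop (𝓝 ((√(2 * Real.pi / (1 + b)) : ℝ) : ℂ)) := by
  obtain ⟨κ, hκ, hbd⟩ := exists_kappa (kk b) (kk_cont b) (1 + b) (AA b) (BB b) (by linarith)
    (AA_pos b hb) (BB_pos b hb) (kk_lim b hb) (kk_zero b) (fun τ h1 h2 => kk_neg b hb τ h1 h2)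
  have h := laplace (kk b) (fun τ : ℝ => Complex.exp ((1 - a) * (τ * dir b))) (kk_cont b) (by fun_prop)
    (1 + b) κ (AA b) (BB b) hκ (AA_pos b hb) (BB_pos b hb) (kk_lim b hb) (kk_zero b) hbd
  simpa [spir] using h

lemma tail_bd (a b : ℝ) (hb : 0 < b) : ∃ η > 0, ∃ C : ℝ, ∀ R : ℝ, 1 ≤ R →
    ‖tailv a b R‖ ≤ C * Real.exp (R * (MM b - η)) := by
  obtain ⟨η, hη, hv, hh⟩ := tail_eta b hb
  have hr0 := rr1_pos b hb
  set D := ‖((rr1 b + Real.pi * Complex.I) - (rr1 b + psi1 b * Complex.I) : ℂ)‖ with hD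
  set I0 := ∫ r in Set.Ioi (rr1 b), Real.exp (-(1 * Real.exp r) + (1 - a) * r)
  refine ⟨η, hη, D * Real.exp ((1 - a) * rr1 b) + Real.exp (1 / b - (MM b - η)) * I0, ?_⟩
  intro R hR
  unfold tailv
  refine (norm_add_le _ _).trans ?_
  rw [norm_mul, ← hD, add_mul]
  apply add_le_add
  · rw [mul_assoc]
    apply mul_le_mul_of_nonneg_left _ (norm_nonneg _)
    have := intervalIntegral.norm_integral_le_of_norm_le_const (a := 0) (b := 1)
      (f := fun t : ℝ => PP a b R ((rr1 b + psi1 b * Complex.I) +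
        t * ((rr1 b + Real.pi * Complex.I) - (rr1 b + psi1 b * Complex.I))))
      (C := Real.exp ((1 - a) * rr1 b) * Real.exp (R * (MM b - η))) ?_
    · simpa using this
    · intro t ht
      rw [Set.uIoc_of_le zero_le_one] at ht
      have e : ((rr1 b + psi1 b * Complex.I) +
        t * ((rr1 b + Real.pi * Complex.I) - (rr1 b + psi1 b * Complex.I)) : ℂ) =
        rr1 b + ((psi1 b + t * (Real.pi - psi1 b) : ℝ) : ℂ) * Complex.I := by push_cast; ring
      have hp : psi1 b ≤ Real.pi := min_le_right _ _
      have hb2 := hv (psi1 b + t * (Real.pi - psi1 b)) ⟨by nlinarith [ht.1], by nlinarith [ht.2]⟩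
      rw [e, PP_norm, ← Real.exp_add]
      apply Real.exp_le_exp.2
      have e3 : (rr1 b + ((psi1 b + t * (Real.pi - psi1 b) : ℝ) : ℂ) * Complex.I).re = rr1 b := by
        simp
      rw [e3]
      nlinarith
  · have hIntg := (integrableOn_expexp 1 (1 - a) (rr1 b) one_pos).const_mul
      (Real.exp (1 / b - (MM b - η)) * Real.exp (R * (MM b - η)))
    have := norm_integral_le_of_norm_le hIntg (f := fun r : ℝ => PP a b R (r + Real.pi * Complex.I)) ?_
    · rw [integral_const_mul] at this
      refine this.trans (le_of_eq ?_)
      ring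
    · filter_upwards [ae_restrict_mem measurableSet_Ioi] with r hr
      have hr' : rr1 b < r := hr
      have h2 := hh r hr'.le
      have h3 : (GG b (r + Real.pi * Complex.I)).re ≤ - Real.exp r + 1 / b := by
        rw [GG_pi_re]
        have : -(Real.exp (-(b * r)) * Real.cos (b * Real.pi) / b) ≤ 1 / b := by
          rw [← neg_div]
          apply div_le_div_of_nonneg_right _ hb.le
          have e1 : Real.exp (-(b * r)) ≤ 1 := by
            rw [← Real.exp_zero]; exact Real.exp_le_exp.2 (by nlinarith)
          have e2 := Real.exp_pos (-(b * r))
          have e3 := Real.neg_one_le_cos (b * Real.pi)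
          nlinarith
        linarith
      rw [PP_norm, ← Real.exp_add, ← Real.exp_add]
      apply Real.exp_le_exp.2
      have e3 : ((r:ℂ) + Real.pi * Complex.I).re = r := by simp
      rw [e3]
      nlinarith

lemma dir_exp (b : ℝ) : dir b = Complex.I * Complex.exp (-(phi b / 2 : ℝ) * Complex.I) := by
  unfold dir
  rw [Complex.exp_mul_I, ← Complex.ofReal_neg, ← Complex.ofReal_cos, ← Complex.ofReal_sin]
  simp only [Real.cos_neg, Real.sin_neg]
  push_cast
  linear_combination (Complex.sin (phi b / 2)) * Complex.I_sq

/-- Asymptotics of Wright's function. -/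
lemma wright_asymp (a b : ℝ) (ha : 0 < a) (hb : 0 < b) :
    Tendsto (fun R : ℝ => R ^ (a - 1 / 2) * Real.exp (-(R * MM b)) * wrightJ a b (R ^ (1 + b) / b)
      - √(2 / (Real.pi * (1 + b))) * Real.cos (R * SS b + (1 / 2 - a) * phi b)) atTop (𝓝 0) := by
  obtain ⟨η, hη, C, hC⟩ := tail_bd a b hb
  set L : ℝ := √(2 * Real.pi / (1 + b)) with hL
  have hs : Tendsto (fun R : ℝ => (√R : ℂ) * spir a b R - L) atTop (𝓝 0) := by
    have := (spir_lim a b hb).sub_const (L:ℂ)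
    rwa [← hL, sub_self] at this
  have ht : Tendsto (fun R : ℝ => C * (R ^ (1 / 2 : ℝ) * Real.exp (-η * R))) atTop (𝓝 0) := by
    simpa using (tendsto_rpow_mul_exp_neg_mul_atTop_nhds_zero (1 / 2) η hη).const_mul C
  have hsum := (hs.norm.add ht).div_const Real.pi
  simp only [norm_zero, add_zero, zero_div] at hsum
  refine squeeze_zero_norm' ?_ hsum
  filter_upwards [eventually_ge_atTop 1] with R hR
  have hR0 : 0 < R := by linarith
  rw [wright_PP a b R ha hb hR0 (rr1 b), hank_PP a b R hb]
  set ph : ℂ := Complex.exp (((R * SS b + (1 - a) * phi b - phi b / 2 : ℝ) : ℂ) * Complex.I) with hph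
  have e1 : Complex.exp (R * GG b (phi b * Complex.I)) * Complex.exp ((1 - a) * (phi b * Complex.I)) *
      (dir b * spir a b R) = (Real.exp (R * MM b) : ℝ) * (Complex.I * ph * spir a b R) := by
    rw [dir_exp, hph]
    have hg : GG b (phi b * Complex.I) = (MM b : ℂ) + SS b * Complex.I := by
      apply Complex.ext
      · rw [GG_saddle_re b hb]; simp
      · rw [GG_saddle_im b hb]; simp
    rw [hg, Complex.ofReal_exp]
    have : Complex.exp (R * (MM b + SS b * Complex.I)) * Complex.exp ((1 - a) * (phi b * Complex.I)) *
      Complex.exp (-(phi b / 2 : ℝ) * Complex.I) = Complex.exp ((R * MM b : ℝ) : ℂ) *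
        Complex.exp (((R * SS b + (1 - a) * phi b - phi b / 2 : ℝ) : ℂ) * Complex.I) := by
      rw [← Complex.exp_add, ← Complex.exp_add, ← Complex.exp_add]
      congr 1; push_cast; ring
    linear_combination (Complex.I * spir a b R) * this
  have e2 : R ^ (a - 1 / 2) * Real.exp (-(R * MM b)) * (R ^ (1 - a) / Real.pi) =
      √R * Real.exp (-(R * MM b)) / Real.pi := by
    have : √R = R ^ (a - 1 / 2) * R ^ (1 - a) := by
      rw [Real.sqrt_eq_rpow, ← Real.rpow_add hR0]; congr 1; ring
    rw [this]; ring
  have e3 : √(2 / (Real.pi * (1 + b))) = L / Real.pi := by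
    have hpi := Real.pi_pos
    rw [hL, Real.sqrt_eq_iff_mul_self_eq (by positivity) (by positivity)]
    have : √(2 * Real.pi / (1 + b)) * √(2 * Real.pi / (1 + b)) = 2 * Real.pi / (1 + b) :=
      Real.mul_self_sqrt (by positivity)
    rw [div_mul_div_comm, this]
    field_simp
  have e4 : Real.cos (R * SS b + (1 / 2 - a) * phi b) = (Complex.I * ph).im := by
    have h : (Complex.I * ph).im = ph.re := by simp
    rw [h, hph, Complex.exp_ofReal_mul_I_re]; congr 1; ring
  have key : R ^ (a - 1 / 2) * Real.exp (-(R * MM b)) * (R ^ (1 - a) / Real.pi *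
      (Complex.exp (R * GG b (phi b * Complex.I)) * Complex.exp ((1 - a) * (phi b * Complex.I)) *
      (dir b * spir a b R) + tailv a b R).im) -
      √(2 / (Real.pi * (1 + b))) * Real.cos (R * SS b + (1 / 2 - a) * phi b) =
      (Complex.I * ph * ((√R : ℂ) * spir a b R - L) +
        ((√R * Real.exp (-(R * MM b)) : ℝ) : ℂ) * tailv a b R).im / Real.pi := by
    rw [← mul_assoc, e2, e3, e4, e1]
    have f1 : √R * Real.exp (-(R * MM b)) / Real.pi * ((Real.exp (R * MM b) : ℝ) * (Complex.I * ph * spir a b R) + tailv a b R).im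
      = (((√R * Real.exp (-(R * MM b)) : ℝ) : ℂ) * ((Real.exp (R * MM b) : ℝ) * (Complex.I * ph * spir a b R) + tailv a b R)).im / Real.pi := by
      rw [Complex.im_ofReal_mul]; ring
    have f2 : L / Real.pi * (Complex.I * ph).im = ((L:ℂ) * (Complex.I * ph)).im / Real.pi := by
      rw [Complex.im_ofReal_mul]; ring
    rw [f1, f2, ← sub_div, ← Complex.sub_im]
    congr 2
    have f3 : ((Real.exp (-(R * MM b)) : ℝ) : ℂ) * (Real.exp (R * MM b) : ℝ) = 1 := by
      rw [← Complex.ofReal_mul, ← Real.exp_add]; simp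
    rw [Complex.ofReal_mul]
    linear_combination ((√R : ℂ) * (Complex.I * ph * spir a b R)) * f3
  rw [key, norm_div, Real.norm_of_nonneg Real.pi_pos.le]
  apply div_le_div_of_nonneg_right _ Real.pi_pos.le
  rw [Real.norm_eq_abs]
  refine (Complex.abs_im_le_norm _).trans ((norm_add_le _ _).trans (add_le_add (le_of_eq ?_) ?_))
  · rw [norm_mul, norm_mul, hph, Complex.norm_exp_ofReal_mul_I]; simp
  · rw [norm_mul, Complex.norm_real, Real.norm_of_nonneg (by positivity)]
    refine (mul_le_mul_of_nonneg_left (hC R hR) (by positivity)).trans (le_of_eq ?_)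
    rw [Real.sqrt_eq_rpow]
    have : Real.exp (-η * R) = Real.exp (-(R * MM b)) * Real.exp (R * (MM b - η)) := by
      rw [← Real.exp_add]; congr 1; ring
    rw [this]; ring


lemma avg_lemma (f : ℝ → ℝ) (κ C1 C2 lam μ : ℝ) (hκ : 0 < κ) (hlam : 0 < lam)
    (hfc : ∀ x, 0 < x → ContinuousAt f x) (hfm : StronglyMeasurable f)
    (hfi : ∀ x, 0 < x → IntervalIntegrable f volume 0 x)
    (hlim : Tendsto (fun v : ℝ => f v * v ^ (1 - κ) - (C1 + C2 * Real.cos (lam * v ^ κ + μ))) atTop (𝓝 0)) :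
    Tendsto (fun x : ℝ => x ^ (-κ) * ∫ v in (0:ℝ)..x, f v) atTop (𝓝 (C1 / κ)) := by
  set D : ℝ → ℝ := fun x => C1 / κ * x ^ κ + C2 / (lam * κ) * Real.sin (lam * x ^ κ + μ) with hD
  set H : ℝ → ℝ := fun x => (∫ v in (0:ℝ)..x, f v) - D x with hH
  have hpow : ∀ x : ℝ, 0 < x → HasDerivAt (fun x : ℝ => x ^ κ) (κ * x ^ (κ - 1)) x := fun x hx =>
    Real.hasDerivAt_rpow_const (Or.inl hx.ne')
  have hDd : ∀ x, 0 < x → HasDerivAt D (x ^ (κ - 1) * (C1 + C2 * Real.cos (lam * x ^ κ + μ))) x := by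
    intro x hx
    have h1 := (hpow x hx).const_mul (C1 / κ)
    have h2 := ((((hpow x hx).const_mul lam).add_const μ).sin).const_mul (C2 / (lam * κ))
    refine (h1.add h2).congr_deriv ?_
    field_simp
  have hHd : ∀ x, 0 < x → HasDerivAt H (f x - x ^ (κ - 1) * (C1 + C2 * Real.cos (lam * x ^ κ + μ))) x := by
    intro x hx
    exact (intervalIntegral.integral_hasDerivAt_right (hfi x hx)
      (hfm.stronglyMeasurableAtFilter) (hfc x hx)).sub (hDd x hx)
  have hxk : Tendsto (fun x : ℝ => x ^ (-κ)) atTop (𝓝 0) := tendsto_rpow_neg_atTop hκ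
  have hH0 : Tendsto (fun x : ℝ => x ^ (-κ) * H x) atTop (𝓝 0) := by
    rw [Metric.tendsto_atTop'] at *
    intro δ hδ
    obtain ⟨N0, hN0⟩ := hlim (κ * (δ / 2)) (by positivity)
    set N := max N0 1 with hNd
    have hN1 : 1 ≤ N := le_max_right _ _
    have hN2 : N0 ≤ N := le_max_left _ _
    have hg : ∀ x, N < x → |f x - x ^ (κ - 1) * (C1 + C2 * Real.cos (lam * x ^ κ + μ))| ≤
        (δ / 2) * (κ * x ^ (κ - 1)) := by
      intro x hx
      have hx0 : 0 < x := by linarith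
      have := hN0 x (by linarith)
      rw [dist_zero_right, Real.norm_eq_abs] at this
      have e : f x - x ^ (κ - 1) * (C1 + C2 * Real.cos (lam * x ^ κ + μ)) =
        x ^ (κ - 1) * (f x * x ^ (1 - κ) - (C1 + C2 * Real.cos (lam * x ^ κ + μ))) := by
        have : x ^ (κ - 1) * x ^ (1 - κ) = 1 := by rw [← Real.rpow_add hx0]; simp
        linear_combination (-f x) * this
      have hp : 0 < x ^ (κ - 1) := Real.rpow_pos_of_pos hx0 _
      rw [e, abs_mul, abs_of_pos hp]
      nlinarith
    have hmono : MonotoneOn (fun x => (δ / 2) * x ^ κ + H x) (Set.Ici N) := by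
      apply monotoneOn_of_hasDerivWithinAt_nonneg (convex_Ici N)
        (f' := fun x => (δ / 2) * (κ * x ^ (κ - 1)) + (f x - x ^ (κ - 1) * (C1 + C2 * Real.cos (lam * x ^ κ + μ))))
      · intro x hx
        have hx0 : 0 < x := by linarith [Set.mem_Ici.1 hx]
        exact (((hpow x hx0).const_mul (δ / 2)).add (hHd x hx0)).continuousAt.continuousWithinAt
      · intro x hx
        rw [interior_Ici] at hx
        have hx0 : 0 < x := by linarith [Set.mem_Ioi.1 hx]
        exact (((hpow x hx0).const_mul (δ / 2)).add (hHd x hx0)).hasDerivWithinAt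
      · intro x hx
        rw [interior_Ici] at hx
        have := (abs_le.1 (hg x hx)).1
        linarith
    have hanti : MonotoneOn (fun x => (δ / 2) * x ^ κ - H x) (Set.Ici N) := by
      apply monotoneOn_of_hasDerivWithinAt_nonneg (convex_Ici N)
        (f' := fun x => (δ / 2) * (κ * x ^ (κ - 1)) - (f x - x ^ (κ - 1) * (C1 + C2 * Real.cos (lam * x ^ κ + μ))))
      · intro x hx
        have hx0 : 0 < x := by linarith [Set.mem_Ici.1 hx]
        exact (((hpow x hx0).const_mul (δ / 2)).sub (hHd x hx0)).continuousAt.continuousWithinAt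
      · intro x hx
        rw [interior_Ici] at hx
        have hx0 : 0 < x := by linarith [Set.mem_Ioi.1 hx]
        exact (((hpow x hx0).const_mul (δ / 2)).sub (hHd x hx0)).hasDerivWithinAt
      · intro x hx
        rw [interior_Ici] at hx
        have := (abs_le.1 (hg x hx)).2
        linarith
    obtain ⟨N3, hN3⟩ := hxk (δ / 2 / (|H N| + 1)) (by positivity)
    refine ⟨max N N3, fun x hx => ?_⟩
    have hxN : N < x := lt_of_le_of_lt (le_max_left _ _) hx
    have hx0 : 0 < x := by linarith
    have h3 := hN3 x (lt_of_le_of_lt (le_max_right _ _) hx)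
    have hp : 0 < x ^ (-κ) := Real.rpow_pos_of_pos hx0 _
    rw [dist_zero_right, Real.norm_eq_abs, abs_of_pos hp, lt_div_iff₀ (by positivity)] at h3
    have m1 := hmono Set.self_mem_Ici (Set.mem_Ici.2 hxN.le) hxN.le
    have m2 := hanti Set.self_mem_Ici (Set.mem_Ici.2 hxN.le) hxN.le
    simp only at m1 m2
    have hNk : 0 < N ^ κ := Real.rpow_pos_of_pos (by linarith) _
    have hb : |H x| ≤ |H N| + (δ / 2) * x ^ κ := by
      rw [abs_le]
      have a1 := neg_abs_le (H N)
      have a2 := le_abs_self (H N)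
      constructor <;> nlinarith
    have hxx : x ^ (-κ) * x ^ κ = 1 := by rw [← Real.rpow_add hx0]; simp
    rw [dist_zero_right, Real.norm_eq_abs, abs_mul, abs_of_pos hp]
    calc x ^ (-κ) * |H x| ≤ x ^ (-κ) * (|H N| + (δ / 2) * x ^ κ) := by gcongr
      _ = x ^ (-κ) * |H N| + δ / 2 := by linear_combination (δ / 2) * hxx
      _ < δ := by nlinarith
  have hD0 : Tendsto (fun x : ℝ => x ^ (-κ) * D x) atTop (𝓝 (C1 / κ)) := by
    have h1 : Tendsto (fun x : ℝ => x ^ (-κ) * (C2 / (lam * κ) * Real.sin (lam * x ^ κ + μ))) atTop (𝓝 0) := by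
      refine squeeze_zero_norm' (a := fun x : ℝ => x ^ (-κ) * |C2 / (lam * κ)|) ?_ ?_
      · filter_upwards [eventually_gt_atTop 0] with x hx
        rw [norm_mul, norm_mul, Real.norm_of_nonneg (Real.rpow_pos_of_pos hx _).le]
        have hp : 0 < x ^ (-κ) := Real.rpow_pos_of_pos hx _
        have := Real.abs_sin_le_one (lam * x ^ κ + μ)
        apply mul_le_mul_of_nonneg_left _ hp.le
        exact mul_le_of_le_one_right (norm_nonneg _) this
      · simpa using hxk.mul_const (|C2 / (lam * κ)|)
    have h2 : Tendsto (fun x : ℝ => C1 / κ + x ^ (-κ) * (C2 / (lam * κ) * Real.sin (lam * x ^ κ + μ))) atTop (𝓝 (C1 / κ)) := by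
      simpa using h1.const_add (C1 / κ)
    refine h2.congr' ?_
    filter_upwards [eventually_gt_atTop 0] with x hx
    have hxx : x ^ (-κ) * x ^ κ = 1 := by rw [← Real.rpow_add hx]; simp
    simp only [hD]
    linear_combination (-(C1 / κ)) * hxx
  have := hH0.add hD0
  rw [zero_add] at this
  refine this.congr ?_
  intro x
  simp only [hH]; ring

lemma prod_lim {X Y x y : ℝ → ℝ} {l : Filter ℝ} (c d : ℝ)
    (hX : Tendsto (fun v => X v - x v) l (𝓝 0)) (hY : Tendsto (fun v => Y v - y v) l (𝓝 0))
    (hx : ∀ v, |x v| ≤ c) (hy : ∀ v, |y v| ≤ d) :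
    Tendsto (fun v => X v * Y v - x v * y v) l (𝓝 0) := by
  have h1 := hX.mul hY
  have h2 : Tendsto (fun v => x v * (Y v - y v)) l (𝓝 0) := by
    apply squeeze_zero_norm (a := fun v => c * |Y v - y v|)
    · intro v; rw [norm_mul]
      exact mul_le_mul_of_nonneg_right (hx v) (norm_nonneg _)
    · simpa using hY.abs.const_mul c
  have h3 : Tendsto (fun v => y v * (X v - x v)) l (𝓝 0) := by
    apply squeeze_zero_norm (a := fun v => d * |X v - x v|)
    · intro v; rw [norm_mul]
      exact mul_le_mul_of_nonneg_right (hy v) (norm_nonneg _)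
    · simpa using hX.abs.const_mul d
  have := (h1.add h2).add h3
  simp only [mul_zero, add_zero] at this
  refine this.congr fun v => by ring

noncomputable def ff (α θ v : ℝ) : ℝ :=
  wrightJ ((α + 1) / θ) (1 / θ) v * wrightJ (α + 1) θ (v ^ θ) * v ^ α

lemma ff_cont (α θ : ℝ) (hα : -1 < α) (hθ : 0 < θ) :
    Continuous (fun v : ℝ => wrightJ ((α + 1) / θ) (1 / θ) v * wrightJ (α + 1) θ (v ^ θ)) := by
  have h1 := wright_cont ((α + 1) / θ) (1 / θ) (div_pos (by linarith) hθ) (by positivity)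
  have h2 := wright_cont (α + 1) θ (by linarith) hθ
  exact h1.mul (h2.comp (Real.continuous_rpow_const hθ.le))

lemma ff_lim (α θ : ℝ) (hα : -1 < α) (hθ : 0 < θ) : ∃ C2 lam μ : ℝ, 0 < lam ∧
    Tendsto (fun v : ℝ => ff α θ v * v ^ (1 - θ / (1 + θ)) -
      (θ / (1 + θ) / Real.pi * θ ^ (-(θ / (1 + θ))) * Real.sin (Real.pi / (1 + θ)) +
        C2 * Real.cos (lam * v ^ (θ / (1 + θ)) + μ))) atTop (𝓝 0) := by
  set κ := θ / (1 + θ) with hκ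
  have h1θ : 0 < 1 + θ := by linarith
  have hpi := Real.pi_pos
  have hκ0 : 0 < κ := by positivity
  set E := 2 * κ / Real.pi * θ ^ (-κ) with hE
  set a := (α + 1) / θ with had
  have ha : 0 < a := div_pos (by linarith) hθ
  set p := (1 / 2 - a) * phi (1 / θ) with hp
  set q := (1 / 2 - (α + 1)) * phi θ with hq
  have hφ : phi (1 / θ) = Real.pi - phi θ := by
    unfold phi; field_simp; ring
  have hφθ : 0 < phi θ := phi_pos θ hθ
  have hsin : 0 < Real.sin (phi θ) := Real.sin_pos_of_pos_of_lt_pi hφθ (phi_lt θ hθ)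
  set ω := θ ^ (-κ) * ((1 + θ) * Real.sin (phi θ)) with hω
  have hω0 : 0 < ω := by positivity
  have hpq : p - q = Real.pi / 2 - phi θ := by
    rw [hp, hq, hφ, had]
    unfold phi; field_simp; ring
  have hSA : SS (1 / θ) = (1 + θ) * Real.sin (phi θ) := by
    unfold SS; rw [hφ, Real.sin_pi_sub]; simp
  have hSB : θ * SS θ = (1 + θ) * Real.sin (phi θ) := by
    unfold SS; field_simp; ring
  have hMA : MM (1 / θ) = -(θ * MM θ) := by
    unfold MM; rw [hφ, Real.cos_pi_sub]; field_simp; ring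
  refine ⟨E / 2, 2 * ω, p + q, by positivity, ?_⟩

  set RA : ℝ → ℝ := fun v => θ ^ (-κ) * v ^ κ with hRA
  have hRAt : Tendsto RA atTop atTop :=
    (tendsto_rpow_atTop hκ0).const_mul_atTop (Real.rpow_pos_of_pos hθ _)
  have hRBt : Tendsto (fun v => θ * RA v) atTop atTop := hRAt.const_mul_atTop hθ
  have hA := (wright_asymp a (1 / θ) ha (by positivity)).comp hRAt
  have hB := (wright_asymp (α + 1) θ (by linarith) hθ).comp hRBt
  simp only [Function.comp_def] at hA hB
  set cA := √(2 / (Real.pi * (1 + 1 / θ)))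
  set cB := √(2 / (Real.pi * (1 + θ)))
  have hcc : cA * cB = √θ * (2 / (Real.pi * (1 + θ))) := by
    have : 2 / (Real.pi * (1 + 1 / θ)) = θ * (2 / (Real.pi * (1 + θ))) := by field_simp; ring
    simp only [cA, cB]
    rw [this, Real.sqrt_mul hθ.le, mul_assoc, Real.mul_self_sqrt (by positivity)]
  have hprod := prod_lim cA cB hA hB
    (fun v => by
      rw [abs_mul, abs_of_nonneg (Real.sqrt_nonneg _)]
      exact mul_le_of_le_one_right (Real.sqrt_nonneg _) (Real.abs_cos_le_one _))
    (fun v => by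
      rw [abs_mul, abs_of_nonneg (Real.sqrt_nonneg _)]
      exact mul_le_of_le_one_right (Real.sqrt_nonneg _) (Real.abs_cos_le_one _))
  have hfin := hprod.const_mul (√θ * θ ^ (-κ))
  rw [mul_zero] at hfin
  refine hfin.congr' ?_
  filter_upwards [eventually_gt_atTop 0] with v hv
  have hR : 0 < RA v := mul_pos (Real.rpow_pos_of_pos hθ _) (Real.rpow_pos_of_pos hv _)
  have hRdef : RA v = (v / θ) ^ κ := by
    simp only [hRA]; rw [Real.div_rpow hv.le hθ.le, Real.rpow_neg hθ.le]; field_simp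
  have hvθ : 0 < v / θ := by positivity
  have hR1 : RA v ^ (1 + 1 / θ) = v / θ := by
    rw [hRdef, ← Real.rpow_mul hvθ.le]
    have : κ * (1 + 1 / θ) = 1 := by rw [hκ]; field_simp; ring
    rw [this, Real.rpow_one]
  have hargA : RA v ^ (1 + 1 / θ) / (1 / θ) = v := by rw [hR1]; field_simp
  have hargB : (θ * RA v) ^ (1 + θ) / θ = v ^ θ := by
    rw [Real.mul_rpow hθ.le hR.le, hRdef, ← Real.rpow_mul hvθ.le]
    have : κ * (1 + θ) = θ := by rw [hκ]; field_simp
    rw [this, Real.div_rpow hv.le hθ.le, Real.rpow_add hθ, Real.rpow_one]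
    have := (Real.rpow_pos_of_pos hθ θ).ne'
    field_simp
  have hcosA : RA v * SS (1 / θ) + (1 / 2 - a) * phi (1 / θ) = ω * v ^ κ + p := by
    rw [hSA, hp, hω]; ring
  have hcosB : θ * RA v * SS θ + (1 / 2 - (α + 1)) * phi θ = ω * v ^ κ + q := by
    rw [mul_comm θ, mul_assoc, hSB, hq, hω]; ring
  rw [hargA, hargB, hcosA, hcosB]
  have hexp : Real.exp (-(RA v * MM (1 / θ))) * Real.exp (-(θ * RA v * MM θ)) = 1 := by
    rw [← Real.exp_add, hMA]
    have : -(RA v * -(θ * MM θ)) + -(θ * RA v * MM θ) = 0 := by ring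
    rw [this, Real.exp_zero]
  have hpw : √θ * θ ^ (-κ) * (RA v ^ (a - 1 / 2) * (θ * RA v) ^ (α + 1 - 1 / 2)) = v ^ α * v ^ (1 - κ) := by
    have h3 : RA v ^ (a - 1 / 2) * (θ * RA v) ^ (α + 1 - 1 / 2) =
        θ ^ (α + 1 - 1 / 2) * ((v / θ) ^ (α + 1) / RA v) := by
      rw [Real.mul_rpow hθ.le hR.le]
      have : (v / θ) ^ (α + 1) / RA v = RA v ^ (a - 1 / 2) * RA v ^ (α + 1 - 1 / 2) := by
        rw [← hR1, ← Real.rpow_mul hR.le, ← Real.rpow_add hR]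
        nth_rewrite 2 [← Real.rpow_one (RA v)]
        rw [← Real.rpow_sub hR]
        congr 1
        rw [had]; field_simp; ring
      rw [this]; ring
    rw [h3, hRdef, ← Real.rpow_sub hvθ, Real.div_rpow hv.le hθ.le, Real.sqrt_eq_rpow, ← Real.rpow_add hv]
    have h4 : θ ^ (1 / 2 : ℝ) * θ ^ (-κ) * θ ^ (α + 1 - 1 / 2) = θ ^ (α + 1 - κ) := by
      rw [← Real.rpow_add hθ, ← Real.rpow_add hθ]; congr 1; ring
    have h5 : v ^ (α + 1 - κ) = v ^ (α + (1 - κ)) := by congr 1; ring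
    have h6 := (Real.rpow_pos_of_pos hθ (α + 1 - κ)).ne'
    rw [← h5, ← mul_assoc, h4]; field_simp
  have hcos : Real.cos (ω * v ^ κ + p) * Real.cos (ω * v ^ κ + q) =
      (Real.cos (2 * ω * v ^ κ + (p + q)) + Real.sin (Real.pi / (1 + θ))) / 2 := by
    have h1 : Real.sin (Real.pi / (1 + θ)) = Real.cos (p - q) := by
      rw [hpq, Real.cos_pi_div_two_sub]; rfl
    have h2 : 2 * ω * v ^ κ + (p + q) = (ω * v ^ κ + p) + (ω * v ^ κ + q) := by ring
    have h3 : p - q = (ω * v ^ κ + p) - (ω * v ^ κ + q) := by ring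
    rw [h1, h2, h3, Real.cos_add (ω * v ^ κ + p), Real.cos_sub (ω * v ^ κ + p)]; ring
  have hEE : √θ * θ ^ (-κ) * (cA * cB) = E := by
    rw [hcc, hE, hκ]
    have : √θ * √θ = θ := Real.mul_self_sqrt hθ.le
    have h2 : √θ * θ ^ (-κ) * (√θ * (2 / (Real.pi * (1 + θ)))) =
      (√θ * √θ) * θ ^ (-κ) * (2 / (Real.pi * (1 + θ))) := by ring
    rw [← hκ, h2, this, hκ]; field_simp
  unfold ff
  set WA := wrightJ a (1 / θ) v
  set WB := wrightJ (α + 1) θ (v ^ θ)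
  have hEc : κ / Real.pi * θ ^ (-κ) = E / 2 := by rw [hE]; ring
  rw [hEc]
  set eA := Real.exp (-(RA v * MM (1 / θ)))
  set eB := Real.exp (-(θ * RA v * MM θ))
  set u1 := RA v ^ (a - 1 / 2)
  set u2 := (θ * RA v) ^ (α + 1 - 1 / 2)
  linear_combination (√θ * θ ^ (-κ) * u1 * u2 * WA * WB) * hexp + WA * WB * hpw
    - Real.cos (ω * v ^ κ + p) * Real.cos (ω * v ^ κ + q) * hEE - E * hcos

lemma main_thm (α θ : ℝ) (hα : -1 < α) (hθ : 0 < θ) :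
    Tendsto (fun x : ℝ => x ^ (1 / (1 + θ)) * borodinK α θ x x) atTop
      (𝓝 ((1 / Real.pi) * θ ^ (1 / (1 + θ)) * Real.sin (Real.pi / (1 + θ)))) := by
  obtain ⟨C2, lam, μ, hlam, hlim⟩ := ff_lim α θ hα hθ
  have h1θ : 0 < 1 + θ := by linarith
  have hκ0 : 0 < θ / (1 + θ) := by positivity
  have hc := ff_cont α θ hα hθ
  have h := avg_lemma (ff α θ) (θ / (1 + θ)) _ C2 lam μ hκ0 hlam
    (fun x hx => hc.continuousAt.mul (Real.continuousAt_rpow_const _ _ (Or.inl hx.ne')))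
    ((hc.measurable.mul (measurable_id.pow_const α)).stronglyMeasurable)
    (fun x _ => (intervalIntegral.intervalIntegrable_rpow' hα).continuousOn_mul hc.continuousOn) hlim
  have h2 := h.const_mul θ
  set κ := θ / (1 + θ) with hκ
  have e1 : 1 / (1 + θ) = 1 - κ := by rw [hκ]; field_simp; ring
  have e2 : θ * (κ / Real.pi * θ ^ (-κ) * Real.sin (Real.pi / (1 + θ)) / κ) =
      (1 / Real.pi) * θ ^ (1 / (1 + θ)) * Real.sin (Real.pi / (1 + θ)) := by
    rw [e1, sub_eq_add_neg, Real.rpow_add hθ, Real.rpow_one]; field_simp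
  rw [e2] at h2
  refine h2.congr' ?_
  filter_upwards [eventually_gt_atTop 0] with x hx
  unfold borodinK
  rw [e1]
  have h3 := intervalIntegral.smul_integral_comp_mul_left (a := 0) (b := 1) (ff α θ) x
  rw [mul_zero, mul_one, smul_eq_mul] at h3
  rw [← h3]
  have h4 : (∫ u in (0:ℝ)..1, ff α θ (x * u)) = x ^ α * ∫ u in (0 : ℝ)..1,
    wrightJ ((α + 1) / θ) (1 / θ) (x * u) * wrightJ (α + 1) θ ((x * u) ^ θ) * u ^ α := by
    rw [← intervalIntegral.integral_const_mul]
    apply intervalIntegral.integral_congr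
    intro u hu
    rw [Set.uIcc_of_le zero_le_one] at hu
    simp only [ff]
    rw [Real.mul_rpow hx.le hu.1 (z := α)]; ring
  rw [h4]
  have h5 : x ^ (-κ) * x = x ^ (1 - κ) := by
    nth_rewrite 2 [← Real.rpow_one x]
    rw [← Real.rpow_add hx]; congr 1; ring
  rw [← h5]; ring

/-- Large-`x` asymptotics of the diagonal of Borodin's hard edge kernel. -/
theorem borodin_kernel_diagonal_asymptotics (α θ : ℝ) (hα : -1 < α) (hθ : 0 < θ) :
    Tendsto (fun x : ℝ => x ^ (1 / (1 + θ)) * borodinK α θ x x) atTop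
      (𝓝 ((1 / Real.pi) * θ ^ (1 / (1 + θ)) * Real.sin (Real.pi / (1 + θ)))) := by
  exact main_thm α θ hα hθ
end
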